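/- arXiv:2302.01333 — 4 statements merged into one kernel-verified Lean document; each statement's English description precedes it below -/
import Mathlib

section
/- There exists an absolute constant c₀ > 0 such that the following holds. For any integers O ≥ S ≥ 5, A ≥ 3, any horizon H with H ≥ 4·log₂ S, any α ∈ (0, 1/(5H)], and any T ≥ 1, there exists a finite family ℳ of finite episodic POMDPs with horizon H, with |𝒮| ≤ S, |𝒪| ≤ O, |𝒜| = A, each of which is single-step (m = 1) α-revealing, such that for every T-episode algorithm 𝔄: max_{M∈ℳ} E_M^𝔄[Regret] ≥ c₀ · min{ (S·O^{1/2}·A·H·T/α²)^{1/2}, (S·A^{H/2}·H·T)^{1/2}, T }. -/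
/-!
The hard instances are combination locks hidden behind a selection phase. With `H = L + 1` and
time indices `0, …, L`, the first `d ≈ H/4` actions select one of `n ≈ S/2` observable leaves.
During the next `K ≈ H/4` indices the learner may leave the current leaf for the lock. A secret
`θ` consists of a leaf, an entry index and a password: entering from that leaf at that index with
the first password letter leads, with probability `ε`, to the good lock state; every other entry
leads to the bad one, and one wrong letter later on turns the good state into the bad one. The
lock states emit `2 m ≈ O/2` symbols, uniformly in the bad state and with a relative tilt of size
`σ = 3 α` in a hidden sign pattern `μ ∈ {±1}^m` in the good state; at the last index the tilt is
constant and known, and the positive symbols pay reward `1`. The tilt makes the model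
`α`-revealing (`Cfg.model_revealing`), yet the good state is worth only an extra `ε/4`
(`Cfg.value_eq`), and a policy loses at least `ε/10` times its probability of not following the
secret until the end (`Cfg.gap_le`).

The trajectory law is the law of a reference model, in which the good state is never reached,
times an explicit likelihood ratio `Cfg.lam` (`Cfg.trajProb_eq`). For two patterns `μ, ν` the
product of the ratios has, per live index, a conditional mean of at most
`1 + O(ε² σ² |corr μ ν|)`, and of `1 + O(ε²)` at the last index (`Cfg.second_moment`). As
`|corr μ ν|` is of order `1/√m` on average over the patterns (`sum_exp_corr`), an episode costs the
learner a weight of about `ε² σ² / √m` per live index, plus `ε²` for a live end (`Cfg.wt`).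
Truncating the ratios once the total weight exceeds `1`, a second-moment argument shows: if the
expected total weight under the *reference* law is small, then under some pattern `μ` the total
weight stays at most `1` with probability at least `1/2` (`exists_small_weight`). The weight
includes `2/T` per live end, so on this event at least half of the episodes miss the secret.

It remains to choose `θ` (`Cfg.exists_secret`). A fixed trajectory can be live only for secrets
with one particular leaf and entry index, and for those only while the password agrees with the
played actions (`Cfg.count_live`); averaged over the `n K` leaves and entry indices and all
passwords, the expected weight per episode is of order
`(ε² σ² / (√m A) + (ε² + 1/T) / A^{H/2}) / (n K)`. This is at most a small multiple of `1/T` when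
`ε² T` is a small multiple of the minimum of `S √O A H / α²` and `S A^{H/2} H` (`budget_arith`),
and the regret is then at least `ε T / 40` (`Cfg.regret_lower`).
-/

open Finset

noncomputable section

/-- A finite episodic POMDP with horizon `H`, latent state space `S`, observation space `O`,
action space `A`.  Steps are indexed by `1, …, H` (paper convention). -/
structure POMDP (S O A : Type) [Fintype S] [Fintype O] [Fintype A] (H : ℕ) where
  init : S → ℝ
  init_nonneg : ∀ s, 0 ≤ init s
  init_sum : ∑ s, init s = 1
  trans : ℕ → S → A → S → ℝ
  trans_nonneg : ∀ h s a s', 0 ≤ trans h s a s'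
  trans_sum : ∀ h s a, ∑ s', trans h s a s' = 1
  emit : ℕ → S → O → ℝ
  emit_nonneg : ∀ h s o, 0 ≤ emit h s o
  emit_sum : ∀ h s, ∑ o, emit h s o = 1
  reward : ℕ → O → A → ℝ
  reward_nonneg : ∀ h o a, 0 ≤ reward h o a
  reward_le_one : ∀ h o a, reward h o a ≤ 1
  reward_total : ∀ τ : Fin H → O × A, ∑ h : Fin H, reward (h.1 + 1) (τ h).1 (τ h).2 ≤ 1

namespace POMDP

variable {S O A : Type} [Fintype S] [Fintype O] [Fintype A] {H : ℕ}

/-- `emitActProb M m h s ω a` is the probability `ℙ_M(o_{h:h+m−1} = ω | s_h = s,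
a_{h:h+m−2} = a)` of observing the sequence `ω ∈ 𝒪^m` when the latent state at (1-based)
step `h` is `s` and the action sequence `a ∈ 𝒜^{m−1}` is executed. -/
def emitActProb (M : POMDP S O A H) : (m : ℕ) → ℕ → S → (Fin m → O) → (Fin (m - 1) → A) → ℝ
  | 0, _, _, _, _ => 1
  | 1, h, s, ω, _ => M.emit h s (ω 0)
  | m + 2, h, s, ω, a =>
    M.emit h s (ω 0) *
      ∑ s' : S, M.trans h s (a ⟨0, Nat.succ_pos m⟩) s' *
        emitActProb M (m + 1) (h + 1) s' (fun i => ω i.succ) (fun i => a i.succ)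

/-- The `m`-step emission–action matrix `𝕄_{h,m}` (`h` is the 1-based step index). -/
def emitActMatrix (M : POMDP S O A H) (h m : ℕ) :
    Matrix ((Fin m → O) × (Fin (m - 1) → A)) S ℝ :=
  Matrix.of fun p s => M.emitActProb m h s p.1 p.2

/-- The set of columns of the step-(h−1) transition matrix `𝕋_{h−1}`
(the single column `μ₁` when `h = 1`). -/
def stepCols (M : POMDP S O A H) (h : ℕ) : Set (S → ℝ) :=
  if h = 1 then {fun s => M.init s}
  else {c | ∃ s' a', c = fun s => M.trans (h - 1) s' a' s}

/-- `B` is a generalized left inverse of `𝕄_{h,m}`, i.e. `B · 𝕄_{h,m} · 𝕋_{h−1} = 𝕋_{h−1}`. -/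
def IsGenLeftInv (M : POMDP S O A H) (h m : ℕ)
    (B : Matrix S ((Fin m → O) × (Fin (m - 1) → A)) ℝ) : Prop :=
  ∀ c ∈ M.stepCols h, (B * M.emitActMatrix h m).mulVec c = c

end POMDP

/-- The star-norm `‖x‖_* = (Σ_a (Σ_ω |x(ω,a)|)²)^{1/2}`. -/
def starNorm {ι κ : Type} [Fintype ι] [Fintype κ] (x : ι × κ → ℝ) : ℝ :=
  Real.sqrt (∑ a : κ, (∑ ω : ι, |x (ω, a)|) ^ 2)

/-- The `(*→1)`-operator norm `‖B‖_{*→1} = max_{‖x‖_* ≤ 1} ‖Bx‖₁`. -/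
def opNormStarOne {S ι κ : Type} [Fintype S] [Fintype ι] [Fintype κ]
    (B : Matrix S (ι × κ) ℝ) : ℝ :=
  sSup {y | ∃ x : ι × κ → ℝ, starNorm x ≤ 1 ∧ y = ∑ s, |B.mulVec x s|}

/-- The `(1→1)`-operator norm `‖B‖_{1→1} = max_{‖y‖₁ ≤ 1} ‖By‖₁`. -/
def opNormOneOne {ι₁ ι₂ : Type} [Fintype ι₁] [Fintype ι₂] (B : Matrix ι₁ ι₂ ℝ) : ℝ :=
  sSup {y | ∃ v : ι₂ → ℝ, (∑ i, |v i|) ≤ 1 ∧ y = ∑ j, |B.mulVec v j|}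

namespace POMDP
variable {S O A : Type} [Fintype S] [Fintype O] [Fintype A] {H : ℕ}

/-- `M` is `m`-step `α`-revealing. -/
def IsRevealing (M : POMDP S O A H) (m : ℕ) (α : ℝ) : Prop :=
  ∀ h ∈ Finset.Icc 1 (H - m + 1),
    ∃ B : Matrix S ((Fin m → O) × (Fin (m - 1) → A)) ℝ,
      M.IsGenLeftInv h m B ∧ opNormStarOne B ≤ 1 / α

end POMDP

/-- A history-dependent policy: a distribution over actions for every (history, observation). -/
structure Policy (O A : Type) [Fintype A] where
  act : List (O × A) → O → A → ℝ
  act_nonneg : ∀ τ o a, 0 ≤ act τ o a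
  act_sum : ∀ τ o, ∑ a, act τ o a = 1

namespace POMDP
variable {S O A : Type} [Fintype S] [Fintype O] [Fintype A] {H : ℕ}

/-- The probability `ℙ_M^π(τ)` of a full trajectory `τ = (o_1,a_1,…,o_H,a_H)`. -/
def trajProb (M : POMDP S O A H) (π : Policy O A) (τ : Fin H → O × A) : ℝ :=
  ∑ s : Fin H → S, ∏ h : Fin H,
    (if h.1 = 0 then M.init (s h)
     else
       M.trans h.1 (s ⟨h.1 - 1, Nat.lt_of_le_of_lt (Nat.sub_le _ _) h.2⟩)
         (τ ⟨h.1 - 1, Nat.lt_of_le_of_lt (Nat.sub_le _ _) h.2⟩).2 (s h)) *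
    M.emit (h.1 + 1) (s h) (τ h).1 *
    π.act ((List.ofFn τ).take h.1) (τ h).1 (τ h).2

/-- The value `V_M(π)` of a policy. -/
def value (M : POMDP S O A H) (π : Policy O A) : ℝ :=
  ∑ τ : Fin H → O × A, M.trajProb π τ * ∑ h : Fin H, M.reward (h.1 + 1) (τ h).1 (τ h).2

/-- The optimal value `V_M⋆`. -/
def optValue (M : POMDP S O A H) : ℝ := ⨆ π : Policy O A, M.value π

end POMDP

/-- A `T`-episode algorithm: a distribution over actions for every
(past episodes, within-episode history, current observation), and an output policy map. -/
structure Algorithm (O A : Type) [Fintype A] (H : ℕ) where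
  act : List (Fin H → O × A) → List (O × A) → O → A → ℝ
  act_nonneg : ∀ past hist o a, 0 ≤ act past hist o a
  act_sum : ∀ past hist o, ∑ a, act past hist o a = 1
  out : List (Fin H → O × A) → Policy O A

/-- The policy executed by algorithm `𝔄` in the episode following the past episodes `past`. -/
def Algorithm.policyAt {O A : Type} [Fintype A] {H : ℕ} (𝔄 : Algorithm O A H)
    (past : List (Fin H → O × A)) : Policy O A :=
  ⟨fun hist o a => 𝔄.act past hist o a, fun _ _ _ => 𝔄.act_nonneg _ _ _ _,
    fun _ _ => 𝔄.act_sum _ _ _⟩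

namespace POMDP
variable {S O A : Type} [Fintype S] [Fintype O] [Fintype A] {H : ℕ}

/-- The law `ℙ_M^𝔄` of the transcript `(τ^{(1)},…,τ^{(T)})`. -/
def transcriptProb (M : POMDP S O A H) (𝔄 : Algorithm O A H) {T : ℕ}
    (τs : Fin T → Fin H → O × A) : ℝ :=
  ∏ t : Fin T, M.trajProb (𝔄.policyAt ((List.ofFn τs).take t.1)) (τs t)

open Classical in
/-- `ℙ_M^𝔄(V_M⋆ − V_M(π^out) < ε)`. -/
def pacProb (M : POMDP S O A H) (𝔄 : Algorithm O A H) (T : ℕ) (ε : ℝ) : ℝ :=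
  ∑ τs : Fin T → Fin H → O × A,
    if M.optValue - M.value (𝔄.out (List.ofFn τs)) < ε then M.transcriptProb 𝔄 τs else 0

/-- The expected regret `E_M^𝔄[Σ_{t=1}^T (V_M⋆ − V_M(π^{(t)}))]`. -/
def expRegret (M : POMDP S O A H) (𝔄 : Algorithm O A H) (T : ℕ) : ℝ :=
  ∑ τs : Fin T → Fin H → O × A,
    M.transcriptProb 𝔄 τs *
      ∑ t : Fin T, (M.optValue - M.value (𝔄.policyAt ((List.ofFn τs).take t.1)))

end POMDP

/-! ### Laws of sequences with history-dependent kernels -/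

section Seq
variable {X : Type}

/-- History fold: `hfold f b l` starts from `b` and processes the entries of `l` from left to right;
the update `f` also sees the prefix of `l` that was processed before. -/
def hfold {β : Type} (f : β → List X → X → β) (b : β) (l : List X) : β :=
  (l.foldl (fun acc x => (acc.1 ++ [x], f acc.2 acc.1 x)) (([] : List X), b)).2

lemma hfold_fst {β : Type} (f : β → List X → X → β) (b : β) (l : List X) :
    (l.foldl (fun acc x => (acc.1 ++ [x], f acc.2 acc.1 x)) (([] : List X), b)).1 = l := by
  induction l using List.reverseRecOn with
  | nil => rfl
  | append_singleton l x ih => rw [List.foldl_append]; simp [ih]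

@[simp] lemma hfold_nil {β : Type} (f : β → List X → X → β) (b : β) : hfold f b [] = b := rfl

@[simp] lemma hfold_snoc {β : Type} (f : β → List X → X → β) (b : β) (l : List X) (x : X) :
    hfold f b (l ++ [x]) = f (hfold f b l) l x := by
  have h := hfold_fst f b l
  unfold hfold
  rw [List.foldl_append]
  simp only [List.foldl_cons, List.foldl_nil]
  rw [h]

/-- Probability of the sequence `τ` when each entry is drawn from the kernel `κ`
given the list of the previous entries. -/
def seqProb (κ : List X → X → ℝ) {n : ℕ} (τ : Fin n → X) : ℝ :=
  ∏ i : Fin n, κ ((List.ofFn τ).take i.1) (τ i)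

lemma ofFn_snoc {n : ℕ} (τ : Fin n → X) (x : X) :
    List.ofFn (Fin.snoc τ x : Fin (n + 1) → X) = List.ofFn τ ++ [x] := by
  rw [List.ofFn_succ']
  simp [Fin.snoc_castSucc, Fin.snoc_last, List.concat_eq_append]

lemma take_snoc_castSucc {n : ℕ} (τ : Fin n → X) (x : X) (i : Fin n) :
    (List.ofFn (Fin.snoc τ x : Fin (n + 1) → X)).take i.1 = (List.ofFn τ).take i.1 := by
  rw [ofFn_snoc, List.take_append_of_le_length]
  simp [i.2.le]

lemma take_snoc_last {n : ℕ} (τ : Fin n → X) (x : X) :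
    (List.ofFn (Fin.snoc τ x : Fin (n + 1) → X)).take n = List.ofFn τ := by
  rw [ofFn_snoc, List.take_append_of_le_length (by simp)]
  exact List.take_of_length_le (by simp)

lemma seqProb_snoc (κ : List X → X → ℝ) {n : ℕ} (τ : Fin n → X) (x : X) :
    seqProb κ (Fin.snoc τ x : Fin (n + 1) → X) = seqProb κ τ * κ (List.ofFn τ) x := by
  unfold seqProb
  rw [Fin.prod_univ_castSucc]
  simp only [Fin.val_castSucc, take_snoc_castSucc, Fin.snoc_castSucc, Fin.val_last,
    take_snoc_last, Fin.snoc_last]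

lemma seqProb_nonneg (κ : List X → X → ℝ) (h : ∀ l x, 0 ≤ κ l x) {n : ℕ} (τ : Fin n → X) :
    0 ≤ seqProb κ τ := Finset.prod_nonneg fun _ _ => h _ _

lemma seqProb_eq_hfold (κ : List X → X → ℝ) {n : ℕ} (τ : Fin n → X) :
    seqProb κ τ = hfold (fun b l x => b * κ l x) 1 (List.ofFn τ) := by
  induction n with
  | zero => simp [seqProb]
  | succ n ih =>
    obtain ⟨τ, x, rfl⟩ : ∃ τ' x, τ = Fin.snoc τ' x :=
      ⟨Fin.init τ, τ (Fin.last n), (Fin.snoc_init_self τ).symm⟩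
    rw [seqProb_snoc, ofFn_snoc, hfold_snoc, ih]

lemma seqProb_mul (κ κ' : List X → X → ℝ) {n : ℕ} (τ : Fin n → X) :
    seqProb (fun l x => κ l x * κ' l x) τ = seqProb κ τ * seqProb κ' τ :=
  Finset.prod_mul_distrib

variable [Fintype X]

lemma sum_snoc {n : ℕ} (F : (Fin (n + 1) → X) → ℝ) :
    ∑ τ, F τ = ∑ τ : Fin n → X, ∑ x, F (Fin.snoc τ x : Fin (n + 1) → X) := by
  rw [← (Fin.snocEquiv (fun _ => X)).sum_comp, Fintype.sum_prod_type_right]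
  rfl

/-- Expectation of a martingale. -/
lemma seq_mart (κ : List X → X → ℝ) (Φ : List X → ℝ) (n : ℕ)
    (h : ∀ l, l.length < n → ∑ x, κ l x * Φ (l ++ [x]) = Φ l) :
    ∑ τ : Fin n → X, seqProb κ τ * Φ (List.ofFn τ) = Φ [] := by
  induction n with
  | zero => simp [seqProb]
  | succ n ih =>
    rw [sum_snoc, ← ih (fun l hl => h l (by omega))]
    refine Finset.sum_congr rfl fun τ _ => ?_
    simp only [seqProb_snoc, ofFn_snoc]
    rw [← h (List.ofFn τ) (by simp), Finset.mul_sum]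
    exact Finset.sum_congr rfl fun x _ => by ring

/-- Expectation of a supermartingale. -/
lemma seq_super (κ : List X → X → ℝ) (hκ : ∀ l x, 0 ≤ κ l x) (Φ : List X → ℝ) (n : ℕ)
    (h : ∀ l, l.length < n → ∑ x, κ l x * Φ (l ++ [x]) ≤ Φ l) :
    ∑ τ : Fin n → X, seqProb κ τ * Φ (List.ofFn τ) ≤ Φ [] := by
  induction n with
  | zero => simp [seqProb]
  | succ n ih =>
    rw [sum_snoc]
    refine le_trans (Finset.sum_le_sum fun τ _ => ?_) (ih (fun l hl => h l (by omega)))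
    simp only [seqProb_snoc, ofFn_snoc]
    refine le_trans (le_of_eq ?_) (mul_le_mul_of_nonneg_left (h (List.ofFn τ) (by simp))
      (seqProb_nonneg κ hκ τ))
    rw [Finset.mul_sum]
    exact Finset.sum_congr rfl fun x _ => by ring

lemma seq_total (κ : List X → X → ℝ) (h1 : ∀ l, ∑ x, κ l x = 1) (n : ℕ) :
    ∑ τ : Fin n → X, seqProb κ τ = 1 := by
  simpa using seq_mart κ (fun _ => 1) n (fun l _ => by simp [h1])

/-- Tower property: in an expected sum of stage rewards `g`, each stage reward may be replaced by its
conditional expectation given the past. -/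
lemma seq_tower (κ : List X → X → ℝ) (h1 : ∀ l, ∑ x, κ l x = 1) (g : List X → X → ℝ) (n : ℕ) :
    ∑ τ : Fin n → X, seqProb κ τ * ∑ t : Fin n, g ((List.ofFn τ).take t.1) (τ t) =
      ∑ τ : Fin n → X, seqProb κ τ *
        ∑ t : Fin n, ∑ x, κ ((List.ofFn τ).take t.1) x * g ((List.ofFn τ).take t.1) x := by
  induction n with
  | zero => simp
  | succ n ih =>
    rw [sum_snoc, sum_snoc]
    simp only [seqProb_snoc, Fin.sum_univ_castSucc, Fin.val_castSucc, take_snoc_castSucc,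
      Fin.snoc_castSucc, Fin.val_last, take_snoc_last, Fin.snoc_last, mul_add,
      Finset.sum_add_distrib]
    congr 1
    · refine Eq.trans ?_ (ih.trans ?_)
      · refine Finset.sum_congr rfl fun τ _ => ?_
        rw [← Finset.sum_mul, ← Finset.mul_sum, h1, mul_one]
      · refine Finset.sum_congr rfl fun τ _ => ?_
        rw [← Finset.sum_mul, ← Finset.mul_sum, h1, mul_one]
    · refine Finset.sum_congr rfl fun τ _ => ?_
      rw [← Finset.sum_mul, ← Finset.mul_sum, h1, mul_one, Finset.mul_sum]
      exact Finset.sum_congr rfl fun x _ => by ring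

end Seq

/-! ### Truncated likelihood ratios and random sign patterns -/

section Stopping
variable {X : Type}

/-- Total weight of a list, frozen as soon as it exceeds `1`. -/
def stopWeight (w : X → ℝ) (l : List X) : ℝ :=
  hfold (fun b _ x => if b ≤ 1 then b + w x else b) 0 l

/-- Product of the likelihood ratios `Λ`, frozen as soon as the total weight exceeds `1`. -/
def stopLik (w Λ : X → ℝ) (l : List X) : ℝ :=
  hfold (fun b l x => if stopWeight w l ≤ 1 then b * Λ x else b) 1 l

@[simp] lemma stopWeight_nil (w : X → ℝ) : stopWeight w [] = 0 := rfl
@[simp] lemma stopLik_nil (w Λ : X → ℝ) : stopLik w Λ [] = 1 := rfl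

lemma stopWeight_snoc (w : X → ℝ) (l : List X) (x : X) :
    stopWeight w (l ++ [x]) = if stopWeight w l ≤ 1 then stopWeight w l + w x
      else stopWeight w l := by
  unfold stopWeight
  rw [hfold_snoc]

lemma stopLik_snoc (w Λ : X → ℝ) (l : List X) (x : X) :
    stopLik w Λ (l ++ [x]) = if stopWeight w l ≤ 1 then stopLik w Λ l * Λ x
      else stopLik w Λ l := by
  simp [stopLik]

lemma stopWeight_nonneg (w : X → ℝ) (hw : ∀ x, 0 ≤ w x) (l : List X) : 0 ≤ stopWeight w l := by
  induction l using List.reverseRecOn with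
  | nil => simp
  | append_singleton l x ih => rw [stopWeight_snoc]; split_ifs <;> linarith [hw x]

lemma stopLik_nonneg (w Λ : X → ℝ) (hΛ : ∀ x, 0 ≤ Λ x) (l : List X) : 0 ≤ stopLik w Λ l := by
  induction l using List.reverseRecOn with
  | nil => simp
  | append_singleton l x ih =>
    rw [stopLik_snoc]; split_ifs
    · exact mul_nonneg ih (hΛ x)
    · exact ih

lemma stopWeight_le_four (w : X → ℝ) (hw : ∀ x, w x ≤ 3) (l : List X) : stopWeight w l ≤ 4 := by
  induction l using List.reverseRecOn with
  | nil => simp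
  | append_singleton l x ih => rw [stopWeight_snoc]; split_ifs <;> linarith [hw x]

lemma stopWeight_le_sum (w : X → ℝ) (hw : ∀ x, 0 ≤ w x) (l : List X) :
    stopWeight w l ≤ (l.map w).sum := by
  induction l using List.reverseRecOn with
  | nil => simp
  | append_singleton l x ih =>
    rw [stopWeight_snoc]; simp only [List.map_append, List.sum_append, List.map_cons,
      List.map_nil, List.sum_singleton]
    split_ifs <;> linarith [hw x]

/-- Before truncation, the stopped quantities are the plain sum and product. -/
lemma stop_eq (w Λ : X → ℝ) (l : List X) (h : stopWeight w l ≤ 1) :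
    stopWeight w l = (l.map w).sum ∧ stopLik w Λ l = (l.map Λ).prod := by
  induction l using List.reverseRecOn with
  | nil => simp
  | append_singleton l x ih =>
    rw [stopWeight_snoc] at h
    have h1 : stopWeight w l ≤ 1 := by
      by_contra hc
      rw [if_neg hc] at h
      exact hc h
    obtain ⟨e1, e2⟩ := ih h1
    rw [stopWeight_snoc, stopLik_snoc, if_pos h1, if_pos h1]
    simp [e1, e2]

variable [Fintype X]

/-- Second-moment bound for the stopped likelihood ratio. -/
lemma stop_second_moment (κ : List X → X → ℝ) (hκ : ∀ l x, 0 ≤ κ l x) (h1 : ∀ l, ∑ x, κ l x = 1)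
    (w Λ Λ' : X → ℝ) (hw3 : ∀ x, w x ≤ 3)
    (hΛ : ∀ x, 0 ≤ Λ x) (hΛ' : ∀ x, 0 ≤ Λ' x) (B : ℝ) (hB : 0 ≤ B)
    (hs : ∀ l, ∑ x, κ l x * (Λ x * Λ' x * Real.exp (-(B * w x))) ≤ 1) (T : ℕ) :
    ∑ τ : Fin T → X, seqProb κ τ * (stopLik w Λ (List.ofFn τ) * stopLik w Λ' (List.ofFn τ))
      ≤ Real.exp (4 * B) := by
  have key := seq_super κ hκ
    (fun l => stopLik w Λ l * stopLik w Λ' l * Real.exp (-(B * stopWeight w l))) T (by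
      intro l _
      have hnn : 0 ≤ stopLik w Λ l * stopLik w Λ' l * Real.exp (-(B * stopWeight w l)) :=
        mul_nonneg (mul_nonneg (stopLik_nonneg w Λ hΛ l) (stopLik_nonneg w Λ' hΛ' l))
          (Real.exp_pos _).le
      by_cases hl : stopWeight w l ≤ 1
      · simp only [stopWeight_snoc, stopLik_snoc, if_pos hl]
        refine le_trans (le_of_eq ?_) ((mul_le_mul_of_nonneg_left (hs l) hnn).trans_eq (mul_one _))
        rw [Finset.mul_sum]
        refine Finset.sum_congr rfl fun x _ => ?_
        rw [show -(B * (stopWeight w l + w x)) = -(B * stopWeight w l) + -(B * w x) by ring,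
          Real.exp_add]
        ring
      · simp only [stopWeight_snoc, stopLik_snoc, if_neg hl]
        rw [← Finset.sum_mul, h1, one_mul])
  simp only [stopLik_nil, stopWeight_nil, mul_one, mul_zero, neg_zero, Real.exp_zero] at key
  calc _ ≤ ∑ τ : Fin T → X, Real.exp (4 * B) * (seqProb κ τ * (stopLik w Λ (List.ofFn τ) *
            stopLik w Λ' (List.ofFn τ) * Real.exp (-(B * stopWeight w (List.ofFn τ))))) := by
        refine Finset.sum_le_sum fun τ _ => ?_
        have hnn : 0 ≤ seqProb κ τ * (stopLik w Λ (List.ofFn τ) * stopLik w Λ' (List.ofFn τ)) :=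
          mul_nonneg (seqProb_nonneg κ hκ τ)
            (mul_nonneg (stopLik_nonneg w Λ hΛ _) (stopLik_nonneg w Λ' hΛ' _))
        have h2 : 1 ≤ Real.exp (4 * B) * Real.exp (-(B * stopWeight w (List.ofFn τ))) := by
          rw [← Real.exp_add]
          refine Real.one_le_exp ?_
          nlinarith [stopWeight_le_four w hw3 (List.ofFn τ)]
        nlinarith [mul_le_mul_of_nonneg_left h2 hnn]
    _ ≤ _ := by
        rw [← Finset.mul_sum]
        exact (mul_le_mul_of_nonneg_left key (Real.exp_pos _).le).trans_eq (mul_one _)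

/-- The truncated likelihood ratio still has mean `1`. -/
lemma stop_mean (κ : List X → X → ℝ) (h1 : ∀ l, ∑ x, κ l x = 1)
    (w Λ : X → ℝ) (hm : ∀ l, ∑ x, κ l x * Λ x = 1) (T : ℕ) :
    ∑ τ : Fin T → X, seqProb κ τ * stopLik w Λ (List.ofFn τ) = 1 := by
  refine seq_mart κ (fun l => stopLik w Λ l) T ?_
  intro l _
  by_cases hl : stopWeight w l ≤ 1
  · simp only [stopLik_snoc, if_pos hl]
    have := congrArg (fun z => stopLik w Λ l * z) (hm l)
    simp only [Finset.mul_sum, mul_one] at this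
    rw [← this]
    exact Finset.sum_congr rfl fun x _ => by rw [this]; ring
  · simp only [stopLik_snoc, if_neg hl]
    rw [← Finset.sum_mul, h1, one_mul]

/-- Indistinguishability under a uniform mixture.  `κ` is the reference law of an episode given the
past, `Λ μ` the likelihood ratio of an episode in model `μ`, and `w` the weight that pays for
the information gained in it.  If the expected total weight under the reference law is small,
then under some model `μ` the total weight is at most `1` with probability at least `1/2`. -/
lemma exists_small_weight {M : Type} [Fintype M] [Nonempty M]
    (κ : List X → X → ℝ) (hκ : ∀ l x, 0 ≤ κ l x) (h1 : ∀ l, ∑ x, κ l x = 1)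
    (w : X → ℝ) (Λ : M → X → ℝ) (hw0 : ∀ x, 0 ≤ w x) (hw3 : ∀ x, w x ≤ 3)
    (hΛ : ∀ μ x, 0 ≤ Λ μ x) (hm : ∀ μ l, ∑ x, κ l x * Λ μ x = 1)
    (B : M → M → ℝ) (hB : ∀ μ ν, 0 ≤ B μ ν)
    (hs : ∀ μ ν l, ∑ x, κ l x * (Λ μ x * Λ ν x * Real.exp (-(B μ ν * w x))) ≤ 1)
    (hexp : ∑ μ, ∑ ν, Real.exp (4 * B μ ν) ≤ 16 * (Fintype.card M : ℝ) ^ 2)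
    (T : ℕ) (hT : ∑ τ : Fin T → X, seqProb κ τ * ∑ t, w (τ t) ≤ 1 / 64) :
    ∃ μ, 1 / 2 ≤ ∑ τ : Fin T → X,
      if ∑ t, w (τ t) ≤ 1 then seqProb κ τ * ∏ t, Λ μ (τ t) else 0 := by
  classical
  set N : ℝ := (Fintype.card M : ℝ) with hN
  have hNpos : 0 < N := by rw [hN]; exact_mod_cast Fintype.card_pos
  -- stopped likelihood ratios and the bad event
  let s : M → (Fin T → X) → ℝ := fun μ τ => stopLik w (Λ μ) (List.ofFn τ)
  let bad : (Fin T → X) → Prop := fun τ => 1 < stopWeight w (List.ofFn τ)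
  have hbad : ∑ τ : Fin T → X, seqProb κ τ * (if bad τ then 1 else 0) ≤ 1 / 64 := by
    refine le_trans (Finset.sum_le_sum fun τ _ => ?_) hT
    refine mul_le_mul_of_nonneg_left ?_ (seqProb_nonneg κ hκ τ)
    have hle := stopWeight_le_sum w hw0 (List.ofFn τ)
    rw [List.map_ofFn, List.sum_ofFn] at hle
    simp only [Function.comp] at hle
    split_ifs with hb
    · have hb' : 1 < stopWeight w (List.ofFn τ) := hb
      linarith
    · exact Finset.sum_nonneg fun t _ => hw0 _
  have hsec : ∑ τ : Fin T → X, seqProb κ τ * (∑ μ, s μ τ) ^ 2 ≤ 16 * N ^ 2 := by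
    refine le_trans (le_of_eq ?_) (le_trans (Finset.sum_le_sum fun μ _ =>
      Finset.sum_le_sum fun ν _ => stop_second_moment κ hκ h1 w (Λ μ) (Λ ν) hw3 (hΛ μ) (hΛ ν)
        (B μ ν) (hB μ ν) (hs μ ν) T) hexp)
    have h3 : ∀ τ : Fin T → X, seqProb κ τ * (∑ μ, s μ τ) ^ 2
        = ∑ μ, ∑ ν, seqProb κ τ * (s μ τ * s ν τ) := by
      intro τ
      rw [sq, Finset.sum_mul_sum, Finset.mul_sum]
      exact Finset.sum_congr rfl fun μ _ => Finset.mul_sum _ _ _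
    rw [Finset.sum_congr rfl fun τ _ => h3 τ, Finset.sum_comm]
    exact Finset.sum_congr rfl fun μ _ => Finset.sum_comm
  -- `1_bad · (Σ_μ s_μ) ≤ 16 N 1_bad + (Σ_μ s_μ)² / (64 N)` by the AM-GM inequality
  have hAM : ∑ τ : Fin T → X, seqProb κ τ * ((if bad τ then 1 else 0) * ∑ μ, s μ τ) ≤ N / 2 := by
    have h4 : ∀ τ : Fin T → X, seqProb κ τ * ((if bad τ then 1 else 0) * ∑ μ, s μ τ) ≤
        16 * N * (seqProb κ τ * (if bad τ then 1 else 0))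
          + 1 / (64 * N) * (seqProb κ τ * (∑ μ, s μ τ) ^ 2) := by
      intro τ
      have hp := seqProb_nonneg κ hκ τ
      set Z := ∑ μ, s μ τ
      have h5 : (if bad τ then (1 : ℝ) else 0) * Z ≤
          16 * N * (if bad τ then 1 else 0) + 1 / (64 * N) * Z ^ 2 := by
        split_ifs
        · have : 16 * N * 1 + 1 / (64 * N) * Z ^ 2 - 1 * Z = 1 / (64 * N) * (Z - 32 * N) ^ 2 := by
            field_simp; ring
          have h6 : 0 ≤ 1 / (64 * N) * (Z - 32 * N) ^ 2 := by positivity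
          linarith
        · have : 0 ≤ 1 / (64 * N) * Z ^ 2 := by positivity
          linarith
      calc _ ≤ seqProb κ τ * (16 * N * (if bad τ then 1 else 0) + 1 / (64 * N) * Z ^ 2) :=
            mul_le_mul_of_nonneg_left h5 hp
        _ = _ := by ring
    refine le_trans (Finset.sum_le_sum fun τ _ => h4 τ) ?_
    rw [Finset.sum_add_distrib, ← Finset.mul_sum, ← Finset.mul_sum]
    have e1 := mul_le_mul_of_nonneg_left hbad (by positivity : (0 : ℝ) ≤ 16 * N)
    have e2 := mul_le_mul_of_nonneg_left hsec (by positivity : (0 : ℝ) ≤ 1 / (64 * N))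
    have e3 : 1 / (64 * N) * (16 * N ^ 2) = N / 4 := by field_simp; ring
    linarith
  by_contra hcon
  push Not at hcon
  have hsplit : ∀ μ, 1 / 2 < ∑ τ : Fin T → X, seqProb κ τ * ((if bad τ then 1 else 0) * s μ τ) := by
    intro μ
    have hmean := stop_mean κ h1 w (Λ μ) (hm μ) T
    have h7 : ∀ τ : Fin T → X, seqProb κ τ * stopLik w (Λ μ) (List.ofFn τ) ≤
        (if ∑ t, w (τ t) ≤ 1 then seqProb κ τ * ∏ t, Λ μ (τ t) else 0) +
          seqProb κ τ * ((if bad τ then 1 else 0) * s μ τ) := by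
      intro τ
      by_cases hb : bad τ
      · rw [if_pos hb, one_mul]
        have : 0 ≤ (if ∑ t, w (τ t) ≤ 1 then seqProb κ τ * ∏ t, Λ μ (τ t) else 0) := by
          split_ifs
          · exact mul_nonneg (seqProb_nonneg κ hκ τ) (Finset.prod_nonneg fun _ _ => hΛ _ _)
          · exact le_rfl
        linarith
      · have hb' : stopWeight w (List.ofFn τ) ≤ 1 := not_lt.mp hb
        obtain ⟨e1, e2⟩ := stop_eq w (Λ μ) _ hb'
        rw [List.map_ofFn, List.sum_ofFn] at e1
        rw [List.map_ofFn, List.prod_ofFn] at e2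
        simp only [Function.comp] at e1 e2
        rw [if_neg hb, if_pos (by rw [← e1]; exact hb'), e2]
        simp
    have h8 := Finset.sum_le_sum fun τ (_ : τ ∈ (Finset.univ : Finset (Fin T → X))) => h7 τ
    rw [Finset.sum_add_distrib, hmean] at h8
    linarith [hcon μ]
  have hlt : N / 2 < ∑ μ, ∑ τ : Fin T → X, seqProb κ τ * ((if bad τ then 1 else 0) * s μ τ) := by
    have : ∑ _μ : M, (1 / 2 : ℝ) = N / 2 := by simp [hN]; ring
    rw [← this]
    exact Finset.sum_lt_sum_of_nonempty Finset.univ_nonempty fun μ _ => hsplit μ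
  rw [Finset.sum_comm] at hlt
  have : ∀ τ : Fin T → X, ∑ μ, seqProb κ τ * ((if bad τ then 1 else 0) * s μ τ) =
      seqProb κ τ * ((if bad τ then 1 else 0) * ∑ μ, s μ τ) := by
    intro τ; rw [Finset.mul_sum, Finset.mul_sum]
  rw [Finset.sum_congr rfl fun τ _ => this τ] at hlt
  linarith

end Stopping

section Signs

/-- The sign `±1` of a Boolean. -/
def sgn (b : Bool) : ℝ := if b then 1 else -1

lemma sgn_mul_self (b : Bool) : sgn b * sgn b = 1 := by cases b <;> simp [sgn]

/-- The normalized correlation of two sign vectors. -/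
def corr {m : ℕ} (μ ν : Fin m → Bool) : ℝ := (∑ i, sgn (μ i) * sgn (ν i)) / m

lemma sum_exp_signs {m : ℕ} (t : ℝ) (ν : Fin m → Bool) :
    ∑ μ : Fin m → Bool, Real.exp (t * ∑ i, sgn (μ i) * sgn (ν i)) ≤
      (2 : ℝ) ^ m * Real.exp (m * (t ^ 2 / 2)) := by
  have h1 : ∀ μ : Fin m → Bool, Real.exp (t * ∑ i, sgn (μ i) * sgn (ν i)) =
      ∏ i, Real.exp (t * (sgn (μ i) * sgn (ν i))) := by
    intro μ; rw [Finset.mul_sum, Real.exp_sum]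
  have h2 := Finset.prod_univ_sum (fun _ : Fin m => (Finset.univ : Finset Bool))
    (fun i b => Real.exp (t * (sgn b * sgn (ν i))))
  rw [Fintype.piFinset_univ] at h2
  rw [Finset.sum_congr rfl fun μ _ => h1 μ, ← h2]
  have h3 : ∀ i, ∑ b, Real.exp (t * (sgn b * sgn (ν i))) = 2 * Real.cosh t := by
    intro i
    rw [Fintype.sum_bool, Real.cosh_eq]
    cases ν i <;> simp [sgn] <;> ring
  rw [Finset.prod_congr rfl fun i _ => h3 i]
  simp only [Finset.prod_const, Finset.card_univ, Fintype.card_fin, mul_pow]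
  rw [Real.exp_nat_mul]
  gcongr
  exact Real.cosh_le_exp_half_sq t

/-- The correlation of two random sign vectors is of order `1 / √m`, in exponential moment. -/
lemma sum_exp_corr {m : ℕ} (hm : 0 < m) :
    ∑ μ : Fin m → Bool, ∑ ν : Fin m → Bool,
      Real.exp (4 * (Real.sqrt m * |corr μ ν| / 4 + 1 / 4)) ≤
      16 * (Fintype.card (Fin m → Bool) : ℝ) ^ 2 := by
  have hm' : (0 : ℝ) < m := by exact_mod_cast hm
  set r := Real.sqrt m with hr
  have hr2 : r ^ 2 = m := Real.sq_sqrt hm'.le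
  have hrpos : 0 < r := Real.sqrt_pos.mpr hm'
  have hcard : (Fintype.card (Fin m → Bool) : ℝ) = 2 ^ m := by simp
  have he : Real.exp 1 * (2 * Real.exp (1 / 2)) ≤ 16 := by
    have h1 : Real.exp 1 ≤ 2.7182818286 := Real.exp_one_lt_d9.le
    have h2 : Real.exp (1 / 2) ≤ 2 := by
      have : Real.exp (1 / 2) ^ 2 = Real.exp 1 := by rw [← Real.exp_nat_mul]; norm_num
      nlinarith [Real.exp_pos (1 / 2)]
    nlinarith [Real.exp_pos (1 / 2), Real.exp_pos 1]
  have hrow : ∀ ν : Fin m → Bool, ∑ μ : Fin m → Bool,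
      Real.exp (4 * (r * |corr μ ν| / 4 + 1 / 4)) ≤ 16 * 2 ^ m := by
    intro ν
    have h1 : ∀ μ : Fin m → Bool, Real.exp (4 * (r * |corr μ ν| / 4 + 1 / 4)) ≤
        Real.exp 1 * (Real.exp (1 / r * ∑ i, sgn (μ i) * sgn (ν i))
          + Real.exp (-(1 / r) * ∑ i, sgn (μ i) * sgn (ν i))) := by
      intro μ
      have e1 : r * corr μ ν = 1 / r * ∑ i, sgn (μ i) * sgn (ν i) := by
        unfold corr; rw [← hr2]; field_simp
      have e2 : 4 * (r * |corr μ ν| / 4 + 1 / 4) = 1 + |1 / r * ∑ i, sgn (μ i) * sgn (ν i)| := by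
        rw [← e1, abs_mul, abs_of_pos hrpos]; ring
      rw [e2, Real.exp_add]
      refine mul_le_mul_of_nonneg_left ?_ (Real.exp_pos _).le
      rw [neg_mul]
      exact Real.exp_abs_le _
    refine le_trans (Finset.sum_le_sum fun μ _ => h1 μ) ?_
    rw [← Finset.mul_sum, Finset.sum_add_distrib]
    have e1 := sum_exp_signs (1 / r) ν
    have e2 := sum_exp_signs (-(1 / r)) ν
    have e3 : (m : ℝ) * ((1 / r) ^ 2 / 2) = 1 / 2 := by rw [← hr2]; field_simp
    rw [neg_sq] at e2
    rw [e3] at e1 e2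
    have hp : (0 : ℝ) < 2 ^ m := by positivity
    calc _ ≤ Real.exp 1 * (2 ^ m * Real.exp (1 / 2) + 2 ^ m * Real.exp (1 / 2)) := by
          gcongr
      _ = (Real.exp 1 * (2 * Real.exp (1 / 2))) * 2 ^ m := by ring
      _ ≤ _ := by gcongr
  rw [Finset.sum_comm]
  refine le_trans (Finset.sum_le_sum fun ν _ => hrow ν) ?_
  simp only [Finset.sum_const, Finset.card_univ, nsmul_eq_mul, hcard]
  rw [sq]
  exact le_of_eq (by ring)

end Signs

/-! ### The hard instances and the revealing condition -/

set_option linter.unusedSectionVars false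

/-- Parameters of the hard instances with horizon `L + 1` (time indices `0, …, L`).
Latent states are `n` *leaves* `inl x` and the two *lock* states `inr true` (good) and `inr false`
(bad); observations are one symbol per leaf and `2 m` lock symbols.  The leaf is selected at the
indices `i < d`; the lock may be entered by any action other than `a0` at the indices
`d ≤ i < d + K` and is entered automatically at index `d + K`.  `σ` is the size of the tilt of
the lock emissions and `ε` the probability with which the correct entry leads to the good state. -/
structure Cfg (S O A : Type) (L : ℕ) where
  n : ℕ
  m : ℕ
  d : ℕ
  K : ℕ
  eS : S ≃ Fin n ⊕ Bool
  eO : O ≃ Fin n ⊕ (Fin m × Bool)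
  a0 : A
  a1 : A
  x0 : Fin n
  σ : ℝ
  ε : ℝ
  hx0 : x0.1 = 0
  hm : 0 < m
  ha : a0 ≠ a1
  hσ0 : 0 < σ
  hσ : (L + 1) * σ ≤ 3 / 5
  hε0 : 0 ≤ ε
  hε : ε ≤ 1 / 4
  hn : n ≤ 2 ^ d
  hdK : d + K < L

namespace Cfg
variable {S O A : Type} [Fintype S] [Fintype O] [Fintype A] [DecidableEq A] {L : ℕ}
variable (c : Cfg S O A L)

/-- A secret: the rewarding leaf, the rewarding entry index (relative to `d`) and the password. -/
abbrev Secret : Type := Fin c.n × Fin c.K × (Fin L → A)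

variable {c} in
/-- The password letter at index `i`, extended by `a0` beyond its range. -/
def Secret.pw (θ : c.Secret) (i : ℕ) : A := if h : i < L then θ.2.2 ⟨i, h⟩ else c.a0

variable {c} in
/-- The correct entry action is not the waiting action `a0`. -/
def Secret.Valid (θ : c.Secret) : Prop := θ.pw (c.d + θ.2.1.1) ≠ c.a0

/-- Leaf selection: action `a1` at index `i` sets the `i`-th binary digit of the leaf. -/
def nav (i : ℕ) (x : Fin c.n) (a : A) : Fin c.n :=
  if h : x.1 + 2 ^ i < c.n then (if a = c.a1 then ⟨x.1 + 2 ^ i, h⟩ else x) else x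

/-- The motion of the leaves: the same in all models, up to the outcome of the correct entry. -/
def leafStep (i : ℕ) (x : Fin c.n) (a : A) : Fin c.n ⊕ Bool :=
  if i < c.d then Sum.inl (c.nav i x a)
  else if i < c.d + c.K ∧ a = c.a0 then Sum.inl x else Sum.inr false

/-- Reference dynamics: the good lock state is never reached. -/
def stepRef (i : ℕ) : Fin c.n ⊕ Bool → A → Fin c.n ⊕ Bool
  | Sum.inl x, a => c.leafStep i x a
  | Sum.inr _, _ => Sum.inr false

/-- Dynamics with secret `θ` when the entry fails. -/
def step0 (θ : c.Secret) (i : ℕ) : Fin c.n ⊕ Bool → A → Fin c.n ⊕ Bool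
  | Sum.inl x, a => c.leafStep i x a
  | Sum.inr b, a => Sum.inr (b && decide (a = θ.pw i))

/-- Dynamics with secret `θ` when the entry succeeds. -/
def step1 (θ : c.Secret) (i : ℕ) (s : Fin c.n ⊕ Bool) (a : A) : Fin c.n ⊕ Bool :=
  if i = c.d + θ.2.1.1 ∧ s = Sum.inl θ.1 ∧ a = θ.pw i then Sum.inr true else c.step0 θ i s a

/-- The untilted emission law: leaves are observed, lock states emit uniform lock symbols. -/
def q : Fin c.n ⊕ Bool → Fin c.n ⊕ (Fin c.m × Bool) → ℝ
  | Sum.inl x, Sum.inl y => if x = y then 1 else 0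
  | Sum.inl _, Sum.inr _ => 0
  | Sum.inr _, Sum.inl _ => 0
  | Sum.inr _, Sum.inr _ => 1 / (2 * c.m)

/-- The relative tilt of the emission of the good lock state at index `i`; at the last index it
is large and known. -/
def tilt (μ : Fin c.m → Bool) (i : ℕ) : Fin c.n ⊕ (Fin c.m × Bool) → ℝ
  | Sum.inl _ => 0
  | Sum.inr kb => if i = L then 1 / 2 * sgn kb.2 else c.σ * (sgn (μ kb.1) * sgn kb.2)

/-- The rewarded observations: the lock symbols of positive sign. -/
def good : Fin c.n ⊕ (Fin c.m × Bool) → Bool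
  | Sum.inl _ => false
  | Sum.inr kb => kb.2

/-- The emission law, tilted in the good lock state. -/
def em (μ : Fin c.m → Bool) (i : ℕ) (s : Fin c.n ⊕ Bool) (o : Fin c.n ⊕ (Fin c.m × Bool)) : ℝ :=
  c.q s o * (1 + if s = Sum.inr true then c.tilt μ i o else 0)

lemma q_nonneg (s o) : 0 ≤ c.q s o := by
  rcases s with x | b <;> rcases o with y | kb <;> simp only [q]
  · split_ifs <;> norm_num
  · exact le_rfl
  · exact le_rfl
  · positivity

lemma σ_le : c.σ ≤ 3 / 5 := by
  have h := c.hσ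
  have h0 := c.hσ0
  have : (0 : ℝ) ≤ (L : ℝ) * c.σ := by positivity
  nlinarith

lemma abs_tilt_le (μ i o) (hi : i ≠ L) : |c.tilt μ i o| ≤ c.σ := by
  have h0 := c.hσ0
  rcases o with y | ⟨k, b⟩
  · simp [tilt, h0.le]
  · simp only [tilt, if_neg hi]
    cases μ k <;> cases b <;> simp [sgn, abs_of_pos h0]

lemma abs_tilt_le' (μ i o) : |c.tilt μ i o| ≤ 3 / 5 := by
  by_cases hi : i = L
  · rcases o with y | ⟨k, b⟩
    · simp [tilt]; norm_num
    · simp only [tilt, if_pos hi]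
      cases b <;> norm_num [sgn, abs_of_pos]
  · exact (c.abs_tilt_le μ i o hi).trans c.σ_le

lemma one_add_tilt_nonneg (μ i o) (P : Prop) [Decidable P] :
    0 ≤ 1 + if P then c.tilt μ i o else 0 := by
  have := neg_abs_le (c.tilt μ i o)
  have := c.abs_tilt_le' μ i o
  split_ifs <;> linarith

lemma m_pos : (0 : ℝ) < c.m := by exact_mod_cast c.hm

lemma sum_q_inr (b : Bool) (F : Fin c.n ⊕ (Fin c.m × Bool) → ℝ) :
    ∑ o, c.q (Sum.inr b) o * F o =
      1 / (2 * c.m) * ∑ k, (F (Sum.inr (k, true)) + F (Sum.inr (k, false))) := by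
  rw [Fintype.sum_sum_type]
  simp only [q, zero_mul, Finset.sum_const_zero, zero_add]
  rw [Fintype.sum_prod_type]
  simp only [Fintype.sum_bool]
  rw [Finset.mul_sum]
  exact Finset.sum_congr rfl fun _ _ => by ring

lemma sum_q (s) : ∑ o, c.q s o = 1 := by
  have hm := c.m_pos
  rcases s with x | b
  · rw [Fintype.sum_sum_type]; simp [q]
  · have := c.sum_q_inr b (fun _ => 1)
    simp only [mul_one, Finset.sum_const, Finset.card_univ, Fintype.card_fin, nsmul_eq_mul] at this
    rw [this]; field_simp; norm_num

lemma sum_q_tilt (b μ i) : ∑ o, c.q (Sum.inr b) o * c.tilt μ i o = 0 := by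
  rw [sum_q_inr]
  have : ∀ k, c.tilt μ i (Sum.inr (k, true)) + c.tilt μ i (Sum.inr (k, false)) = 0 := by
    intro k; simp only [tilt]; split_ifs <;> simp [sgn]
  simp [this]

lemma sum_q_tilt_tilt (b μ ν i) (hi : i ≠ L) :
    ∑ o, c.q (Sum.inr b) o * (c.tilt μ i o * c.tilt ν i o) = c.σ ^ 2 * corr μ ν := by
  have hm := c.m_pos
  rw [sum_q_inr]
  simp only [tilt, if_neg hi]
  unfold corr
  have : ∀ k, (c.σ * (sgn (μ k) * sgn true) * (c.σ * (sgn (ν k) * sgn true)) +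
      c.σ * (sgn (μ k) * sgn false) * (c.σ * (sgn (ν k) * sgn false)))
      = 2 * c.σ ^ 2 * (sgn (μ k) * sgn (ν k)) := by
    intro k; simp only [sgn]; simp only [if_true, Bool.false_eq_true, if_false]; ring
  simp only [this]
  rw [← Finset.mul_sum]
  field_simp

lemma sum_q_tilt_tilt_last (b μ ν) :
    ∑ o, c.q (Sum.inr b) o * (c.tilt μ L o * c.tilt ν L o) = 1 / 4 := by
  have hm := c.m_pos
  rw [sum_q_inr]
  simp [tilt, sgn]
  field_simp; norm_num

lemma sum_q_good (b) : ∑ o, c.q (Sum.inr b) o * (if c.good o then 1 else 0) = 1 / 2 := by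
  have hm := c.m_pos
  rw [sum_q_inr]
  simp [good]
  field_simp

lemma sum_q_tilt_good (b μ) :
    ∑ o, c.q (Sum.inr b) o * (c.tilt μ L o * (if c.good o then 1 else 0)) = 1 / 4 := by
  have hm := c.m_pos
  rw [sum_q_inr]
  simp [good, tilt, sgn]
  field_simp; norm_num

lemma q_true : c.q (Sum.inr true) = c.q (Sum.inr false) := by
  funext o; rcases o with y | kb <;> rfl

lemma sum_em (μ i s) : ∑ o, c.em μ i s o = 1 := by
  simp only [em, mul_add, mul_one, Finset.sum_add_distrib, c.sum_q]
  rcases s with x | b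
  · simp
  · by_cases hb : b = true
    · subst hb; simp [c.sum_q_tilt]
    · simp [hb]

/-- The hard instance with secret `θ` and sign vector `μ`. -/
def model (θ : c.Secret) (μ : Fin c.m → Bool) : POMDP S O A (L + 1) where
  init s := if c.eS s = Sum.inl c.x0 then 1 else 0
  init_nonneg s := by split_ifs <;> norm_num
  init_sum := by
    rw [c.eS.sum_comp (fun s => if s = Sum.inl c.x0 then (1 : ℝ) else 0)]; simp
  trans h s a s' := (1 - c.ε) * (if c.eS s' = c.step0 θ (h - 1) (c.eS s) a then 1 else 0) +
    c.ε * (if c.eS s' = c.step1 θ (h - 1) (c.eS s) a then 1 else 0)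
  trans_nonneg h s a s' := by
    have := c.hε0
    have := c.hε
    split_ifs <;> linarith
  trans_sum h s a := by
    rw [Finset.sum_add_distrib, ← Finset.mul_sum, ← Finset.mul_sum,
      c.eS.sum_comp (fun s' => if s' = c.step0 θ (h - 1) (c.eS s) a then (1 : ℝ) else 0),
      c.eS.sum_comp (fun s' => if s' = c.step1 θ (h - 1) (c.eS s) a then (1 : ℝ) else 0)]
    simp
  emit h s o := c.em μ (h - 1) (c.eS s) (c.eO o)
  emit_nonneg h s o := mul_nonneg (c.q_nonneg _ _) (c.one_add_tilt_nonneg _ _ _ _)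
  emit_sum h s := by
    rw [c.eO.sum_comp (fun o => c.em μ (h - 1) (c.eS s) o)]; exact c.sum_em _ _ _
  reward h o _ := if h = L + 1 ∧ c.good (c.eO o) = true then 1 else 0
  reward_nonneg h o a := by split_ifs <;> norm_num
  reward_le_one h o a := by split_ifs <;> norm_num
  reward_total τ := by
    rw [Fin.sum_univ_castSucc]
    have : ∀ i : Fin L, (if (i.castSucc : Fin (L + 1)).1 + 1 = L + 1 ∧
        c.good (c.eO (τ i.castSucc).1) = true then (1 : ℝ) else 0) = 0 := by
      intro i
      have := i.2
      rw [if_neg]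
      rintro ⟨h, -⟩
      simp at h
      omega
    rw [Finset.sum_congr rfl fun i _ => this i]
    simp only [Finset.sum_const_zero, zero_add]
    split_ifs <;> norm_num

/-- The hard instances are single-step revealing: with `s` the size and `v` the sign pattern of the
tilt, the good state is recovered by the functional `v / s` and the bad one by `1 - v / s`. -/
lemma model_revealing (θ : c.Secret) (μ : Fin c.m → Bool) (α : ℝ) (hα : 0 < α)
    (hασ : c.σ = 3 * α) (hα1 : α ≤ 1 / 6) : (c.model θ μ).IsRevealing 1 α := by
  classical
  intro h _
  set i := h - 1 with hi
  -- reciprocal tilt `v / s`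
  let r : Fin c.n ⊕ (Fin c.m × Bool) → ℝ := fun o => match o with
    | Sum.inl _ => 0
    | Sum.inr kb => if i = L then 2 * sgn kb.2 else (sgn (μ kb.1) * sgn kb.2) / c.σ
  let b : Fin c.n ⊕ Bool → Fin c.n ⊕ (Fin c.m × Bool) → ℝ := fun s o => match s, o with
    | Sum.inl x, Sum.inl y => if x = y then 1 else 0
    | Sum.inl _, Sum.inr _ => 0
    | Sum.inr _, Sum.inl _ => 0
    | Sum.inr true, Sum.inr kb => r (Sum.inr kb)
    | Sum.inr false, Sum.inr kb => 1 - r (Sum.inr kb)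
  have hσ0 := c.hσ0
  have hm := c.m_pos
  have hR : (2 : ℝ) ≤ 1 / (3 * α) := by
    rw [le_div_iff₀ (by positivity)]; linarith
  have hr : ∀ o, |r o| ≤ 1 / (3 * α) := by
    intro o
    rcases o with y | ⟨k, bb⟩
    · simpa [r] using hα.le
    · by_cases hL : i = L
      · simp only [r, if_pos hL]
        refine le_trans (le_of_eq ?_) hR
        cases bb <;> simp [sgn]
      · simp only [r, if_neg hL]
        rw [← hασ]
        cases μ k <;> cases bb <;> simp [sgn, abs_of_pos hσ0, abs_div]
  have hr0 : ∀ bb, ∑ o, c.q (Sum.inr bb) o * r o = 0 := by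
    intro bb
    rw [sum_q_inr]
    have : ∀ k, r (Sum.inr (k, true)) + r (Sum.inr (k, false)) = 0 := by
      intro k; simp only [r]; split_ifs <;> simp [sgn]; ring
    simp [this]
  have hrt : ∀ bb, ∑ o, c.q (Sum.inr bb) o * (r o * c.tilt μ i o) = 1 := by
    intro bb
    rw [sum_q_inr]
    have : ∀ k, r (Sum.inr (k, true)) * c.tilt μ i (Sum.inr (k, true)) +
        r (Sum.inr (k, false)) * c.tilt μ i (Sum.inr (k, false)) = 2 := by
      intro k; simp only [r, tilt]; split_ifs
      · simp [sgn]; norm_num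
      · cases μ k <;> simp [sgn] <;> field_simp <;> norm_num
    simp only [this, Finset.sum_const, Finset.card_univ, Fintype.card_fin, nsmul_eq_mul]
    field_simp
  have hbem : ∀ s s', ∑ o, b s o * c.em μ i s' o = if s = s' then 1 else 0 := by
    intro s s'
    rcases s with x | bs
    · rcases s' with y | bs'
      · rw [Fintype.sum_sum_type]
        simp [b, em, q]
      · rw [Fintype.sum_sum_type]
        simp [b, em, q]
    · rcases s' with y | bs'
      · rw [Fintype.sum_sum_type]
        cases bs <;> simp [b, em, q]
      · have hb1 : ∀ o, b (Sum.inr true) o * c.em μ i (Sum.inr bs') o =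
            c.q (Sum.inr bs') o * r o +
              (if bs' = true then 1 else 0) * (c.q (Sum.inr bs') o * (r o * c.tilt μ i o)) := by
          rintro (y | kb)
          · cases bs' <;> simp [b, em, q]
          · cases bs' <;> simp [b, em] <;> ring
        have hb2 : ∀ o, b (Sum.inr false) o * c.em μ i (Sum.inr bs') o =
            c.em μ i (Sum.inr bs') o - b (Sum.inr true) o * c.em μ i (Sum.inr bs') o := by
          rintro (y | kb)
          · cases bs' <;> simp [b, em, q]
          · simp only [b]; ring
        have hs1 : ∑ o, b (Sum.inr true) o * c.em μ i (Sum.inr bs') o =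
            if bs' = true then 1 else 0 := by
          rw [Finset.sum_congr rfl fun o _ => hb1 o, Finset.sum_add_distrib, hr0, ← Finset.mul_sum,
            hrt]
          simp
        cases bs
        · rw [Finset.sum_congr rfl fun o _ => hb2 o, Finset.sum_sub_distrib, hs1, c.sum_em]
          cases bs' <;> simp
        · rw [hs1]
          cases bs' <;> simp
  let un : (Fin 1 → O) × (Fin (1 - 1) → A) ≃ O :=
    { toFun := fun p => p.1 0
      invFun := fun o => (fun _ => o, fun j => j.elim0)
      left_inv := by
        rintro ⟨f, g⟩
        refine Prod.ext (funext fun j => ?_) (funext fun j => j.elim0)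
        rw [Subsingleton.elim j 0]
      right_inv := fun _ => rfl }
  refine ⟨Matrix.of fun s p => b (c.eS s) (c.eO (p.1 0)), ?_, ?_⟩
  · intro v _
    have hid : (Matrix.of fun s p => b (c.eS s) (c.eO (p.1 0)) :
        Matrix S ((Fin 1 → O) × (Fin (1 - 1) → A)) ℝ) * (c.model θ μ).emitActMatrix h 1 = 1 := by
      ext s s'
      rw [Matrix.mul_apply, Matrix.one_apply]
      have h3 : ∑ p : (Fin 1 → O) × (Fin (1 - 1) → A), (fun o : O => b (c.eS s) (c.eO o) *
          c.em μ i (c.eS s') (c.eO o)) (un p) = if c.eS s = c.eS s' then 1 else 0 := by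
        refine (Fintype.sum_equiv un _ (fun o : O => b (c.eS s) (c.eO o) *
          c.em μ i (c.eS s') (c.eO o)) fun _ => rfl).trans ?_
        rw [c.eO.sum_comp (fun o => b (c.eS s) o * c.em μ i (c.eS s') o), hbem]
      simp only [EmbeddingLike.apply_eq_iff_eq] at h3
      exact h3
    rw [hid, Matrix.one_mulVec]
  · refine Real.sSup_le ?_ (by positivity)
    rintro y ⟨x, hx, rfl⟩
    -- for a single step the star norm is the ℓ¹ norm
    have hx1 : ∑ p, |x p| ≤ 1 := by
      have e1 : ∀ a : Fin (1 - 1) → A, a = fun j => j.elim0 := fun a => funext fun j => j.elim0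
      let u : Unique (Fin (1 - 1) → A) := ⟨⟨fun j => j.elim0⟩, e1⟩
      unfold starNorm at hx
      rw [Fintype.sum_unique, Real.sqrt_sq (Finset.sum_nonneg fun _ _ => abs_nonneg _)] at hx
      rw [Fintype.sum_prod_type]
      simp only [Fintype.sum_unique]
      exact hx
    have hcol : ∀ o, ∑ s, |b s o| ≤ 1 / α := by
      have hα1' : 1 / α = 3 * (1 / (3 * α)) := by field_simp
      rintro (y | kb)
      · rw [Fintype.sum_sum_type]
        have : ∀ x : Fin c.n, |if x = y then (1 : ℝ) else 0| = if x = y then 1 else 0 := by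
          intro x; split_ifs <;> simp
        simp [b, this]
        rw [le_inv_comm₀ one_pos hα]; linarith
      · rw [Fintype.sum_sum_type]
        have h4 := hr (Sum.inr kb)
        have h5 : |1 - r (Sum.inr kb)| ≤ 1 + |r (Sum.inr kb)| := by
          simpa using abs_sub (1 : ℝ) (r (Sum.inr kb))
        have h6 : ∑ s : Bool, |b (Sum.inr s) (Sum.inr kb)| =
          |r (Sum.inr kb)| + |1 - r (Sum.inr kb)| := by rw [Fintype.sum_bool]
        have h7 : ∑ s : Fin c.n, |b (Sum.inl s) (Sum.inr kb)| = 0 := by simp [b]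
        rw [h6, h7]
        linarith
    calc ∑ s, |(Matrix.of fun s p => b (c.eS s) (c.eO (p.1 0)) :
          Matrix S ((Fin 1 → O) × (Fin (1 - 1) → A)) ℝ).mulVec x s|
        ≤ ∑ s, ∑ p : (Fin 1 → O) × (Fin (1 - 1) → A), |b (c.eS s) (c.eO (p.1 0))| * |x p| := by
          refine Finset.sum_le_sum fun s _ => ?_
          refine le_trans (Finset.abs_sum_le_sum_abs _ _) (le_of_eq ?_)
          exact Finset.sum_congr rfl fun p _ => abs_mul _ _
      _ = ∑ p : (Fin 1 → O) × (Fin (1 - 1) → A), (∑ s, |b s (c.eO (p.1 0))|) * |x p| := by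
          rw [Finset.sum_comm]
          refine Finset.sum_congr rfl fun p _ => ?_
          rw [← Finset.sum_mul, c.eS.sum_comp (fun s => |b s (c.eO (p.1 0))|)]
      _ ≤ ∑ p, 1 / α * |x p| :=
          Finset.sum_le_sum fun p _ => mul_le_mul_of_nonneg_right (hcol _) (abs_nonneg _)
      _ ≤ 1 / α := by
          rw [← Finset.mul_sum]
          exact (mul_le_mul_of_nonneg_left hx1 (by positivity)).trans_eq (mul_one _)

end Cfg

/-! ### Factorization of the trajectory law -/

lemma take_ofFn_succ {X : Type} {n : ℕ} (τ : Fin n → X) (k : ℕ) (hk : k < n) :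
    (List.ofFn τ).take (k + 1) = (List.ofFn τ).take k ++ [τ ⟨k, hk⟩] := by
  rw [List.take_add_one]
  simp [hk]

lemma length_take_ofFn {X : Type} {n : ℕ} (τ : Fin n → X) (k : ℕ) (hk : k ≤ n) :
    ((List.ofFn τ).take k).length = k := by
  simp [hk]

/-- A product that is affine in one factor. -/
lemma prod_affine {n : ℕ} (F U V : Fin n → ℝ) (k : Fin n) (ε : ℝ)
    (hU : ∀ h, h ≠ k → F h = U h) (hV : ∀ h, h ≠ k → F h = V h)
    (hk : F k = (1 - ε) * U k + ε * V k) :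
    ∏ h, F h = (1 - ε) * ∏ h, U h + ε * ∏ h, V h := by
  have e1 : ∏ h ∈ univ.erase k, F h = ∏ h ∈ univ.erase k, U h :=
    Finset.prod_congr rfl fun h hh => hU h (Finset.ne_of_mem_erase hh)
  have e2 : ∏ h ∈ univ.erase k, U h = ∏ h ∈ univ.erase k, V h := by
    rw [← e1]; exact Finset.prod_congr rfl fun h hh => hV h (Finset.ne_of_mem_erase hh)
  rw [← Finset.mul_prod_erase univ F (mem_univ k), ← Finset.mul_prod_erase univ U (mem_univ k),
    ← Finset.mul_prod_erase univ V (mem_univ k), e1, hk, ← e2]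
  ring

namespace Cfg
variable {S O A : Type} [Fintype S] [Fintype O] [Fintype A] [DecidableEq A] {L : ℕ}
variable (c : Cfg S O A L)

/-- The state reached by the deterministic dynamics `g` after the history `l`. -/
def path (g : ℕ → Fin c.n ⊕ Bool → A → Fin c.n ⊕ Bool) (l : List (O × A)) : Fin c.n ⊕ Bool :=
  hfold (fun s l x => g l.length s x.2) (Sum.inl c.x0) l

@[simp] lemma path_nil (g) : c.path g [] = Sum.inl c.x0 := rfl

lemma path_snoc (g) (l : List (O × A)) (x : O × A) :
    c.path g (l ++ [x]) = g l.length (c.path g l) x.2 := by simp [path]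

/-- Under deterministic dynamics only one latent path contributes. -/
lemma sum_det (g : ℕ → Fin c.n ⊕ Bool → A → Fin c.n ⊕ Bool) (w : Fin (L + 1) → Fin c.n ⊕ Bool → ℝ)
    (τ : Fin (L + 1) → O × A) :
    ∑ s : Fin (L + 1) → S, ∏ h : Fin (L + 1),
      (if h.1 = 0 then (if c.eS (s h) = Sum.inl c.x0 then (1 : ℝ) else 0)
        else (if c.eS (s h) = g (h.1 - 1)
          (c.eS (s ⟨h.1 - 1, Nat.lt_of_le_of_lt (Nat.sub_le _ _) h.2⟩))
          (τ ⟨h.1 - 1, Nat.lt_of_le_of_lt (Nat.sub_le _ _) h.2⟩).2 then 1 else 0)) *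
        w h (c.eS (s h)) =
      ∏ h : Fin (L + 1), w h (c.path g ((List.ofFn τ).take h.1)) := by
  classical
  have hstep : ∀ k (hk : k + 1 < L + 1), c.path g ((List.ofFn τ).take (k + 1)) =
      g k (c.path g ((List.ofFn τ).take k)) (τ ⟨k, by omega⟩).2 := by
    intro k hk
    rw [take_ofFn_succ τ k (by omega), path_snoc, length_take_ofFn τ k (by omega)]
  rw [Finset.sum_eq_single (fun h : Fin (L + 1) => c.eS.symm (c.path g ((List.ofFn τ).take h.1)))]
  · refine Finset.prod_congr rfl fun h _ => ?_
    rcases h with ⟨k, hk⟩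
    cases k with
    | zero => simp
    | succ k =>
      simp only [Equiv.apply_symm_apply, Nat.add_eq_zero_iff, one_ne_zero, and_false, if_false,
        Nat.add_sub_cancel]
      rw [if_pos (hstep k hk), one_mul]
  · intro s _ hs
    by_contra hne
    rw [← ne_eq, Finset.prod_ne_zero_iff] at hne
    apply hs
    have : ∀ k (hk : k < L + 1), c.eS (s ⟨k, hk⟩) = c.path g ((List.ofFn τ).take k) := by
      intro k
      induction k with
      | zero =>
        intro hk
        have h := left_ne_zero_of_mul (hne ⟨0, hk⟩ (mem_univ _))
        by_contra hc
        refine h ?_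
        rw [if_pos rfl]
        exact if_neg hc
      | succ k ih =>
        intro hk
        have h := left_ne_zero_of_mul (hne ⟨k + 1, hk⟩ (mem_univ _))
        simp only [Nat.add_eq_zero_iff, one_ne_zero, and_false, if_false, Nat.add_sub_cancel,
          ne_eq, ite_eq_right_iff, Classical.not_imp] at h
        rw [h.1, hstep k hk, ih]
    funext h
    rw [← this h.1 h.2, Equiv.symm_apply_apply]
  · intro h; exact absurd (mem_univ _) h

/-- The state under the reference dynamics. -/
def refSt (l : List (O × A)) : Fin c.n ⊕ Bool := c.path c.stepRef l

/-- After the history `l` the good lock state is occupied if the entry succeeded. -/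
def Live (θ : c.Secret) (l : List (O × A)) : Prop := c.path (c.step1 θ) l = Sum.inr true

instance (θ : c.Secret) (l : List (O × A)) : Decidable (c.Live θ l) :=
  inferInstanceAs (Decidable (_ = _))

/-- Indicator of `Live`. -/
def lv (θ : c.Secret) (l : List (O × A)) : ℝ := if c.Live θ l then 1 else 0

lemma refSt_ne (l : List (O × A)) : c.refSt l ≠ Sum.inr true := by
  unfold refSt
  induction l using List.reverseRecOn with
  | nil => simp
  | append_singleton l x ih =>
    rw [path_snoc]
    rcases h : c.path c.stepRef l with y | b
    · simp only [stepRef, leafStep]; split_ifs <;> simp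
    · simp [stepRef]

lemma path_step0 (θ : c.Secret) (l : List (O × A)) : c.path (c.step0 θ) l = c.refSt l := by
  induction l using List.reverseRecOn with
  | nil => rfl
  | append_singleton l x ih =>
    have hne := c.refSt_ne l
    unfold refSt at *
    rw [path_snoc, path_snoc, ih]
    rcases h : c.path c.stepRef l with y | b
    · rfl
    · rw [h] at hne
      have : b = false := by cases b <;> simp_all
      subst this; rfl

/-- The two latent paths differ exactly while the trajectory is live. -/
lemma path_step1 (θ : c.Secret) (hv : θ.Valid) (l : List (O × A)) :
    c.path (c.step1 θ) l = c.refSt l ∨ (c.Live θ l ∧ c.refSt l = Sum.inr false) := by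
  induction l using List.reverseRecOn with
  | nil => left; rfl
  | append_singleton l x ih =>
    have hne := c.refSt_ne l
    unfold Live refSt at *
    rw [path_snoc, path_snoc]
    rcases ih with ih | ⟨ih1, ih2⟩
    · rw [ih]
      by_cases he : l.length = c.d + θ.2.1.1 ∧ c.path c.stepRef l = Sum.inl θ.1 ∧
          x.2 = θ.pw l.length
      · right
        refine ⟨if_pos he, ?_⟩
        rw [he.2.1]
        simp only [stepRef, leafStep]
        rw [if_neg (by omega), if_neg]
        rintro ⟨-, h2⟩
        apply hv
        rw [← he.1, ← he.2.2, h2]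
      · left
        unfold step1
        rw [if_neg he]
        rcases h : c.path c.stepRef l with y | b
        · rfl
        · rw [h] at hne
          have : b = false := by cases b <;> simp_all
          subst this; rfl
    · rw [ih1, ih2]
      unfold step1
      rw [if_neg (by simp)]
      simp only [step0, stepRef, Bool.true_and]
      cases decide (x.2 = θ.pw l.length)
      · left; rfl
      · right; simp

lemma refSt_of_live (θ : c.Secret) (hv : θ.Valid) (l : List (O × A)) (h : c.Live θ l) :
    c.refSt l = Sum.inr false := by
  rcases c.path_step1 θ hv l with h1 | h1
  · exact absurd (h1.symm.trans h) (c.refSt_ne l)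
  · exact h1.2

/-- The reference kernel of one step under the policy `π`. -/
def ker (π : Policy O A) (l : List (O × A)) (x : O × A) : ℝ :=
  c.q (c.refSt l) (c.eO x.1) * π.act l x.1 x.2

/-- Likelihood ratio, against the reference law, of the model in which the entry always succeeds. -/
def lik (θ : c.Secret) (μ : Fin c.m → Bool) (l : List (O × A)) : ℝ :=
  hfold (fun b l x => b * (1 + c.lv θ l * c.tilt μ l.length (c.eO x.1))) 1 l

/-- Likelihood ratio of the hard instance against the reference law. -/
def lam (θ : c.Secret) (μ : Fin c.m → Bool) (l : List (O × A)) : ℝ :=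
  1 - c.ε + c.ε * c.lik θ μ l

@[simp] lemma lik_nil (θ μ) : c.lik θ μ [] = 1 := rfl

lemma lik_snoc (θ μ l x) : c.lik θ μ (l ++ [x]) =
    c.lik θ μ l * (1 + c.lv θ l * c.tilt μ l.length (c.eO x.1)) := by simp [lik]

lemma em_path1 (θ : c.Secret) (hv : θ.Valid) (μ) (i : ℕ) (l : List (O × A)) (o) :
    c.em μ i (c.path (c.step1 θ) l) o = c.q (c.refSt l) o * (1 + c.lv θ l * c.tilt μ i o) := by
  unfold em lv
  by_cases h : c.Live θ l
  · rw [if_pos h, if_pos (show c.path (c.step1 θ) l = Sum.inr true from h),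
      c.refSt_of_live θ hv l h, show c.path (c.step1 θ) l = Sum.inr true from h, q_true, one_mul]
  · rw [if_neg h, if_neg (show ¬ c.path (c.step1 θ) l = Sum.inr true from h)]
    rcases c.path_step1 θ hv l with h1 | h1
    · rw [h1]; simp
    · exact absurd h1.1 h

lemma em_path0 (θ : c.Secret) (μ) (i : ℕ) (l : List (O × A)) (o) :
    c.em μ i (c.path (c.step0 θ) l) o = c.q (c.refSt l) o := by
  unfold em
  rw [path_step0, if_neg (c.refSt_ne l), add_zero, mul_one]

/-- The trajectory law is the reference law times the likelihood ratio. -/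
lemma trajProb_eq (θ : c.Secret) (hv : θ.Valid) (μ : Fin c.m → Bool) (π : Policy O A)
    (τ : Fin (L + 1) → O × A) :
    (c.model θ μ).trajProb π τ = seqProb (c.ker π) τ * c.lam θ μ (List.ofFn τ) := by
  have hK := θ.2.1.2
  have hdK := c.hdK
  let w : Fin (L + 1) → Fin c.n ⊕ Bool → ℝ := fun h s =>
    c.em μ h.1 s (c.eO (τ h).1) * π.act ((List.ofFn τ).take h.1) (τ h).1 (τ h).2
  let F : (ℕ → Fin c.n ⊕ Bool → A → Fin c.n ⊕ Bool) → (Fin (L + 1) → S) → Fin (L + 1) → ℝ :=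
    fun g s h => (if h.1 = 0 then (if c.eS (s h) = Sum.inl c.x0 then (1 : ℝ) else 0)
        else (if c.eS (s h) = g (h.1 - 1)
          (c.eS (s ⟨h.1 - 1, Nat.lt_of_le_of_lt (Nat.sub_le _ _) h.2⟩))
          (τ ⟨h.1 - 1, Nat.lt_of_le_of_lt (Nat.sub_le _ _) h.2⟩).2 then 1 else 0)) *
        w h (c.eS (s h))
  have haff : (c.model θ μ).trajProb π τ =
      ∑ s : Fin (L + 1) → S, ((1 - c.ε) * ∏ h, F (c.step0 θ) s h + c.ε * ∏ h, F (c.step1 θ) s h) := by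
    unfold POMDP.trajProb
    refine Finset.sum_congr rfl fun s _ => ?_
    -- only the transition into index `d + j + 1` is random
    refine prod_affine _ _ _ ⟨c.d + θ.2.1.1 + 1, by omega⟩ _ ?_ ?_ ?_
    · rintro ⟨h, hh⟩ hne
      have hne' : h ≠ c.d + θ.2.1.1 + 1 := fun e => hne (Fin.ext e)
      by_cases h0 : h = 0
      · subst h0; simp [F, w, model]
      · have : ∀ s' a, c.step1 θ (h - 1) s' a = c.step0 θ (h - 1) s' a := by
          intro s' a; unfold step1; rw [if_neg]; rintro ⟨e, -⟩; omega
        simp only [F, w, model, h0, if_false, this, Nat.add_sub_cancel]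
        ring
    · rintro ⟨h, hh⟩ hne
      have hne' : h ≠ c.d + θ.2.1.1 + 1 := fun e => hne (Fin.ext e)
      by_cases h0 : h = 0
      · subst h0; simp [F, w, model]
      · have : ∀ s' a, c.step1 θ (h - 1) s' a = c.step0 θ (h - 1) s' a := by
          intro s' a; unfold step1; rw [if_neg]; rintro ⟨e, -⟩; omega
        simp only [F, w, model, h0, if_false, this, Nat.add_sub_cancel]
        ring
    · simp only [F, w, model, Nat.add_eq_zero_iff, one_ne_zero, and_false, if_false,
        Nat.add_sub_cancel]
      ring
  rw [haff, Finset.sum_add_distrib, ← Finset.mul_sum, ← Finset.mul_sum,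
    c.sum_det (c.step0 θ) w τ, c.sum_det (c.step1 θ) w τ]
  have h0 : ∏ h : Fin (L + 1), w h (c.path (c.step0 θ) ((List.ofFn τ).take h.1)) =
      seqProb (c.ker π) τ := by
    refine Finset.prod_congr rfl fun h _ => ?_
    simp only [w, em_path0, ker]
  have h1 : ∏ h : Fin (L + 1), w h (c.path (c.step1 θ) ((List.ofFn τ).take h.1)) =
      seqProb (c.ker π) τ * c.lik θ μ (List.ofFn τ) := by
    unfold lik
    rw [← seqProb_eq_hfold (fun l x => 1 + c.lv θ l * c.tilt μ l.length (c.eO x.1)), ← seqProb_mul]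
    refine Finset.prod_congr rfl fun h _ => ?_
    simp only [w, c.em_path1 θ hv, ker]
    rw [length_take_ofFn τ h.1 h.2.le]
    ring
  rw [h0, h1]
  unfold lam
  ring

end Cfg

/-! ### The likelihood ratio within an episode -/

lemma sum_eq_hfold {X : Type} (g : List X → ℝ) {n : ℕ} (τ : Fin n → X) :
    ∑ i : Fin n, g ((List.ofFn τ).take i.1) = hfold (fun r l _ => r + g l) 0 (List.ofFn τ) := by
  induction n with
  | zero => simp
  | succ n ih =>
    obtain ⟨τ, x, rfl⟩ : ∃ τ' x, τ = Fin.snoc τ' x :=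
      ⟨Fin.init τ, τ (Fin.last n), (Fin.snoc_init_self τ).symm⟩
    rw [ofFn_snoc, hfold_snoc, ← ih, Fin.sum_univ_castSucc]
    simp only [Fin.val_castSucc, Fin.val_last]
    rw [← ofFn_snoc]
    simp only [take_snoc_castSucc, take_snoc_last]

namespace Cfg
variable {S O A : Type} [Fintype S] [Fintype O] [Fintype A] [DecidableEq A] {L : ℕ}
variable (c : Cfg S O A L)

lemma ker_nonneg (π : Policy O A) (l x) : 0 ≤ c.ker π l x :=
  mul_nonneg (c.q_nonneg _ _) (π.act_nonneg _ _ _)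

lemma ker_sum_obs (π : Policy O A) (l) (G : Fin c.n ⊕ (Fin c.m × Bool) → ℝ) :
    ∑ x, c.ker π l x * G (c.eO x.1) = ∑ o, c.q (c.refSt l) o * G o := by
  rw [Fintype.sum_prod_type, ← c.eO.sum_comp]
  refine Finset.sum_congr rfl fun o _ => ?_
  simp only [ker]
  rw [← Finset.sum_mul, ← Finset.mul_sum, π.act_sum, mul_one]

lemma ker_sum (π : Policy O A) (l) : ∑ x, c.ker π l x = 1 := by
  simpa [c.sum_q] using c.ker_sum_obs π l (fun _ => 1)

lemma lv_nonneg (θ : c.Secret) (l) : 0 ≤ c.lv θ l := by unfold lv; split_ifs <;> norm_num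

lemma lv_le_one (θ : c.Secret) (l) : c.lv θ l ≤ 1 := by unfold lv; split_ifs <;> norm_num

lemma lv_sq (θ : c.Secret) (l) : c.lv θ l * c.lv θ l = c.lv θ l := by
  unfold lv; split_ifs <;> norm_num

lemma ker_tilt (θ : c.Secret) (hv : θ.Valid) (μ i) (π : Policy O A) (l) :
    c.lv θ l * ∑ x, c.ker π l x * c.tilt μ i (c.eO x.1) = 0 := by
  unfold lv
  split_ifs with h
  · rw [c.ker_sum_obs π l (c.tilt μ i), c.refSt_of_live θ hv l h, c.sum_q_tilt, mul_zero]
  · simp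

lemma ker_tilt_tilt (θ : c.Secret) (hv : θ.Valid) (μ ν i) (π : Policy O A) (l) :
    c.lv θ l * ∑ x, c.ker π l x * (c.tilt μ i (c.eO x.1) * c.tilt ν i (c.eO x.1)) =
      c.lv θ l * if i = L then 1 / 4 else c.σ ^ 2 * corr μ ν := by
  unfold lv
  split_ifs with h h1 h1
  · subst h1
    rw [c.ker_sum_obs π l (fun o => c.tilt μ i o * c.tilt ν i o), c.refSt_of_live θ hv l h,
      c.sum_q_tilt_tilt_last]
  · rw [c.ker_sum_obs π l (fun o => c.tilt μ i o * c.tilt ν i o), c.refSt_of_live θ hv l h,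
      c.sum_q_tilt_tilt _ _ _ _ h1]
  · simp
  · simp

lemma lam_snoc (θ μ l x) : c.lam θ μ (l ++ [x]) =
    c.lam θ μ l + c.ε * c.lik θ μ l * (c.lv θ l * c.tilt μ l.length (c.eO x.1)) := by
  unfold lam; rw [lik_snoc]; ring

/-- The likelihood ratio is a martingale under the reference law. -/
lemma ker_lik (θ : c.Secret) (hv : θ.Valid) (μ) (π : Policy O A) (l) :
    ∑ x, c.ker π l x * c.lik θ μ (l ++ [x]) = c.lik θ μ l := by
  have h := c.ker_tilt θ hv μ l.length π l
  simp only [lik_snoc]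
  calc _ = c.lik θ μ l * (∑ x, c.ker π l x) + c.lik θ μ l *
        (c.lv θ l * ∑ x, c.ker π l x * c.tilt μ l.length (c.eO x.1)) := by
        simp only [Finset.mul_sum, ← Finset.sum_add_distrib]
        exact Finset.sum_congr rfl fun x _ => by ring
    _ = _ := by rw [h, c.ker_sum]; ring

lemma ker_lam (θ : c.Secret) (hv : θ.Valid) (μ) (π : Policy O A) (l) :
    ∑ x, c.ker π l x * c.lam θ μ (l ++ [x]) = c.lam θ μ l := by
  unfold lam
  simp only [mul_add, Finset.sum_add_distrib]
  rw [← Finset.sum_mul, c.ker_sum, ← c.ker_lik θ hv μ π l, Finset.mul_sum, one_mul]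
  congr 1
  exact Finset.sum_congr rfl fun x _ => by ring

lemma sum_lam (θ : c.Secret) (hv : θ.Valid) (μ) (π : Policy O A) (n : ℕ) :
    ∑ τ : Fin n → O × A, seqProb (c.ker π) τ * c.lam θ μ (List.ofFn τ) = 1 := by
  rw [seq_mart (c.ker π) (c.lam θ μ) n fun l _ => c.ker_lam θ hv μ π l]
  simp [lam]

lemma sum_lik (θ : c.Secret) (hv : θ.Valid) (μ) (π : Policy O A) (n : ℕ) :
    ∑ τ : Fin n → O × A, seqProb (c.ker π) τ * c.lik θ μ (List.ofFn τ) = 1 := by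
  rw [seq_mart (c.ker π) (c.lik θ μ) n fun l _ => c.ker_lik θ hv μ π l]
  simp

lemma abs_lv_tilt_le (θ μ) (l : List (O × A)) (i o) : |c.lv θ l * c.tilt μ i o| ≤ 3 / 5 := by
  rw [abs_mul, abs_of_nonneg (c.lv_nonneg θ l)]
  have := c.abs_tilt_le' μ i o
  have := c.lv_le_one θ l
  have := c.lv_nonneg θ l
  have := abs_nonneg (c.tilt μ i o)
  nlinarith

lemma lik_nonneg (θ μ) (l : List (O × A)) : 0 ≤ c.lik θ μ l := by
  induction l using List.reverseRecOn with
  | nil => simp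
  | append_singleton l x ih =>
    rw [lik_snoc]
    have := neg_abs_le (c.lv θ l * c.tilt μ l.length (c.eO x.1))
    have := c.abs_lv_tilt_le θ μ l l.length (c.eO x.1)
    exact mul_nonneg ih (by linarith)

lemma lam_nonneg (θ μ) (l : List (O × A)) : 0 ≤ c.lam θ μ l := by
  have := c.lik_nonneg θ μ l
  have h0 := c.hε0
  have := c.hε
  have := mul_nonneg h0 (c.lik_nonneg θ μ l)
  unfold lam; linarith

lemma lik_pow_bounds (θ μ) (l : List (O × A)) (hl : l.length ≤ L) :
    (1 - c.σ) ^ l.length ≤ c.lik θ μ l ∧ c.lik θ μ l ≤ (1 + c.σ) ^ l.length := by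
  induction l using List.reverseRecOn with
  | nil => simp
  | append_singleton l x ih =>
    simp only [List.length_append, List.length_cons, List.length_nil, zero_add] at hl ⊢
    obtain ⟨i1, i2⟩ := ih (by omega)
    rw [lik_snoc, pow_succ, pow_succ]
    have hs := c.σ_le
    have hs0 := c.hσ0
    have ht : |c.lv θ l * c.tilt μ l.length (c.eO x.1)| ≤ c.σ := by
      rw [abs_mul, abs_of_nonneg (c.lv_nonneg θ l)]
      have := c.abs_tilt_le μ l.length (c.eO x.1) (by omega)
      have := c.lv_le_one θ l
      have := c.lv_nonneg θ l
      have := abs_nonneg (c.tilt μ l.length (c.eO x.1))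
      nlinarith
    rw [abs_le] at ht
    have h0 := c.lik_nonneg θ μ l
    constructor
    · exact mul_le_mul i1 (by linarith [ht.1]) (by linarith) h0
    · exact mul_le_mul i2 (by linarith [ht.2]) (by linarith [ht.1]) (by positivity)

/-- Before the last emission the likelihood ratio is bounded, as the accumulated tilt is. -/
lemma lik_bounds (θ μ) (l : List (O × A)) (hl : l.length ≤ L) :
    2 / 5 ≤ c.lik θ μ l ∧ c.lik θ μ l ≤ 2 := by
  obtain ⟨h1, h2⟩ := c.lik_pow_bounds θ μ l hl
  have hs := c.σ_le
  have hs0 := c.hσ0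
  have hLs := c.hσ
  have hl' : (l.length : ℝ) ≤ L := by exact_mod_cast hl
  constructor
  · refine le_trans ?_ h1
    have := one_add_mul_le_pow (a := -c.σ) (by linarith) l.length
    rw [← sub_eq_add_neg] at this
    nlinarith
  · refine h2.trans ?_
    have h3 : (1 + c.σ) ^ l.length ≤ Real.exp (3 / 5) := by
      calc (1 + c.σ) ^ l.length ≤ (Real.exp c.σ) ^ l.length := by
            gcongr; linarith [Real.add_one_le_exp c.σ]
        _ = Real.exp (l.length * c.σ) := (Real.exp_nat_mul _ _).symm
        _ ≤ Real.exp (3 / 5) := by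
            apply Real.exp_le_exp.mpr; nlinarith
    refine h3.trans ?_
    have : Real.exp (3 / 5) ^ 5 ≤ 2 ^ 5 := by
      rw [← Real.exp_nat_mul]
      have e3 : Real.exp ((5 : ℕ) * (3 / 5)) = Real.exp 1 ^ 3 := by
        rw [← Real.exp_nat_mul]; norm_num
      rw [e3]
      have := Real.exp_one_lt_d9
      have h0 := Real.exp_pos 1
      calc Real.exp 1 ^ 3 ≤ (2.8 : ℝ) ^ 3 := by gcongr; linarith
        _ ≤ 2 ^ 5 := by norm_num
    exact le_of_pow_le_pow_left₀ (by norm_num) (by norm_num) this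

/-- Number of live indices of a trajectory, the last index being weighted by `b` and the others
by `a`. -/
def wt (θ : c.Secret) (a b : ℝ) (τ : Fin (L + 1) → O × A) : ℝ :=
  ∑ i : Fin (L + 1), c.lv θ ((List.ofFn τ).take i.1) * if i.1 = L then b else a

lemma wt_mono (θ : c.Secret) {a b a' b' : ℝ} (ha : a ≤ a') (hb : b ≤ b') (τ) :
    c.wt θ a b τ ≤ c.wt θ a' b' τ := by
  refine Finset.sum_le_sum fun i _ => mul_le_mul_of_nonneg_left ?_ (c.lv_nonneg _ _)
  split_ifs <;> assumption

lemma mul_wt (θ : c.Secret) (r a b : ℝ) (τ) : r * c.wt θ a b τ = c.wt θ (r * a) (r * b) τ := by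
  unfold wt
  rw [Finset.mul_sum]
  refine Finset.sum_congr rfl fun i _ => ?_
  split_ifs <;> ring

lemma wt_nonneg (θ : c.Secret) {a b : ℝ} (ha : 0 ≤ a) (hb : 0 ≤ b) (τ) : 0 ≤ c.wt θ a b τ :=
  Finset.sum_nonneg fun i _ => mul_nonneg (c.lv_nonneg _ _) (by split_ifs <;> assumption)

lemma wt_le (θ : c.Secret) {a b : ℝ} (ha : 0 ≤ a) (hb : 0 ≤ b) (τ) : c.wt θ a b τ ≤ L * a + b := by
  have h : c.wt θ a b τ ≤ ∑ i : Fin (L + 1), if i.1 = L then b else a := by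
    refine Finset.sum_le_sum fun i _ => ?_
    refine (mul_le_mul_of_nonneg_right (c.lv_le_one θ _) ?_).trans_eq (one_mul _)
    split_ifs <;> assumption
  refine h.trans (le_of_eq ?_)
  rw [Fin.sum_univ_castSucc]
  have : ∀ i : Fin L, (if (i.castSucc : Fin (L + 1)).1 = L then b else a) = a := by
    intro i
    have := i.2
    exact if_neg (by simp; omega)
  rw [Finset.sum_congr rfl fun i _ => this i]
  simp

lemma last_le_wt (θ : c.Secret) {a b : ℝ} (ha : 0 ≤ a) (hb : 0 ≤ b) (τ : Fin (L + 1) → O × A) :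
    c.lv θ ((List.ofFn τ).take L) * b ≤ c.wt θ a b τ := by
  have := Finset.single_le_sum (f := fun i : Fin (L + 1) =>
    c.lv θ ((List.ofFn τ).take i.1) * if i.1 = L then b else a)
    (fun i _ => mul_nonneg (c.lv_nonneg _ _) (by split_ifs <;> assumption)) (mem_univ (Fin.last L))
  simpa [wt] using this

/-- One step of the second-moment recursion: the cross term has mean zero, and the product of the
tilts contributes their correlation. -/
lemma corr_bound_step (θ : c.Secret) (hv : θ.Valid) (μ ν : Fin c.m → Bool) (π : Policy O A)
    (l : List (O × A)) (hl : l.length ≤ L) :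
    ∑ x, c.ker π l x * (c.lam θ μ (l ++ [x]) * c.lam θ ν (l ++ [x])) ≤
      c.lam θ μ l * c.lam θ ν l *
        (1 + c.lv θ l * if l.length = L then 4 * c.ε ^ 2 else 16 * c.ε ^ 2 * c.σ ^ 2 * |corr μ ν|) := by
  have h1 := c.ker_tilt θ hv μ l.length π l
  have h2 := c.ker_tilt θ hv ν l.length π l
  have h3 := c.ker_tilt_tilt θ hv μ ν l.length π l
  have e : ∑ x, c.ker π l x * (c.lam θ μ (l ++ [x]) * c.lam θ ν (l ++ [x])) =
      c.lam θ μ l * c.lam θ ν l + c.ε ^ 2 * (c.lik θ μ l * c.lik θ ν l) *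
        (c.lv θ l * if l.length = L then 1 / 4 else c.σ ^ 2 * corr μ ν) := by
    calc _ = c.lam θ μ l * c.lam θ ν l * (∑ x, c.ker π l x)
          + c.lam θ ν l * c.ε * c.lik θ μ l *
              (c.lv θ l * ∑ x, c.ker π l x * c.tilt μ l.length (c.eO x.1))
          + c.lam θ μ l * c.ε * c.lik θ ν l *
              (c.lv θ l * ∑ x, c.ker π l x * c.tilt ν l.length (c.eO x.1))
          + c.ε ^ 2 * (c.lik θ μ l * c.lik θ ν l) * (c.lv θ l *
              ∑ x, c.ker π l x * (c.tilt μ l.length (c.eO x.1) * c.tilt ν l.length (c.eO x.1))) := by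
          simp only [Finset.mul_sum, ← Finset.sum_add_distrib]
          refine Finset.sum_congr rfl fun x _ => ?_
          rw [lam_snoc, lam_snoc]
          linear_combination (c.ε ^ 2 * (c.lik θ μ l * c.lik θ ν l) * c.ker π l x *
            (c.tilt μ l.length (c.eO x.1) * c.tilt ν l.length (c.eO x.1))) * c.lv_sq θ l
      _ = _ := by rw [h1, h2, h3, c.ker_sum]; ring
  rw [e, mul_add, mul_one]
  have b1 := c.lik_bounds θ μ l hl
  have b2 := c.lik_bounds θ ν l hl
  have hε0 := c.hε0
  have hε := c.hε
  have l1 : 3 / 4 ≤ c.lam θ μ l := by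
    have := mul_nonneg hε0 (c.lik_nonneg θ μ l)
    unfold lam; linarith
  have l2 : 3 / 4 ≤ c.lam θ ν l := by
    have := mul_nonneg hε0 (c.lik_nonneg θ ν l)
    unfold lam; linarith
  have l3 : 1 / 4 ≤ c.lam θ μ l * c.lam θ ν l := by nlinarith
  have l4 : c.lik θ μ l * c.lik θ ν l ≤ 4 := by nlinarith
  have l5 : 0 ≤ c.lik θ μ l * c.lik θ ν l := mul_nonneg (by linarith) (by linarith)
  have key : ∀ s t : ℝ, |s| * 16 ≤ t → c.ε ^ 2 * (c.lik θ μ l * c.lik θ ν l) * s ≤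
      c.lam θ μ l * c.lam θ ν l * (c.ε ^ 2 * t) := by
    intro s t hst
    have hs := le_abs_self s
    have hs0 := abs_nonneg s
    have hε2 : 0 ≤ c.ε ^ 2 := sq_nonneg _
    calc c.ε ^ 2 * (c.lik θ μ l * c.lik θ ν l) * s
        ≤ c.ε ^ 2 * (c.lik θ μ l * c.lik θ ν l) * |s| :=
          mul_le_mul_of_nonneg_left hs (mul_nonneg hε2 l5)
      _ ≤ c.ε ^ 2 * 4 * |s| := by gcongr
      _ = 1 / 4 * (c.ε ^ 2 * (|s| * 16)) := by ring
      _ ≤ c.lam θ μ l * c.lam θ ν l * (c.ε ^ 2 * t) := by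
          apply mul_le_mul l3 _ (by positivity) (by linarith)
          gcongr
  have key2 := key (if l.length = L then 1 / 4 else c.σ ^ 2 * corr μ ν)
    (if l.length = L then 4 else 16 * c.σ ^ 2 * |corr μ ν|) (by
      split_ifs
      · norm_num
      · rw [abs_mul, abs_of_nonneg (sq_nonneg c.σ)]; linarith)
  have e2 : c.ε ^ 2 * (if l.length = L then (4 : ℝ) else 16 * c.σ ^ 2 * |corr μ ν|) =
      if l.length = L then 4 * c.ε ^ 2 else 16 * c.ε ^ 2 * c.σ ^ 2 * |corr μ ν| := by
    split_ifs <;> ring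
  rw [e2] at key2
  have := mul_le_mul_of_nonneg_left key2 (c.lv_nonneg θ l)
  linarith

/-- Truncated second moment of the likelihood ratios within one episode. -/
lemma second_moment (θ : c.Secret) (hv : θ.Valid) (μ ν : Fin c.m → Bool) (π : Policy O A) :
    ∑ τ : Fin (L + 1) → O × A, seqProb (c.ker π) τ *
      (c.lam θ μ (List.ofFn τ) * c.lam θ ν (List.ofFn τ) *
        Real.exp (-c.wt θ (16 * c.ε ^ 2 * c.σ ^ 2 * |corr μ ν|) (4 * c.ε ^ 2) τ)) ≤ 1 := by
  let cst : List (O × A) → ℝ := fun l => c.lv θ l *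
    if l.length = L then 4 * c.ε ^ 2 else 16 * c.ε ^ 2 * c.σ ^ 2 * |corr μ ν|
  let cost : List (O × A) → ℝ := fun l => hfold (fun r l _ => r + cst l) 0 l
  have hw : ∀ τ : Fin (L + 1) → O × A,
      c.wt θ (16 * c.ε ^ 2 * c.σ ^ 2 * |corr μ ν|) (4 * c.ε ^ 2) τ = cost (List.ofFn τ) := by
    intro τ
    rw [show cost (List.ofFn τ) = _ from (sum_eq_hfold cst τ).symm]
    refine Finset.sum_congr rfl fun i _ => ?_
    simp only [cst]
    rw [length_take_ofFn τ i.1 i.2.le]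
  simp only [hw]
  refine (seq_super (c.ker π) (c.ker_nonneg π)
    (fun l => c.lam θ μ l * c.lam θ ν l * Real.exp (-cost l)) (L + 1) ?_).trans ?_
  · intro l hl
    have hs : ∀ x, cost (l ++ [x]) = cost l + cst l := fun x => by simp [cost]
    simp only [hs]
    have h := c.corr_bound_step θ hv μ ν π l (by omega)
    have h0 : 0 ≤ c.lam θ μ l * c.lam θ ν l := mul_nonneg (c.lam_nonneg _ _ _) (c.lam_nonneg _ _ _)
    calc _ = (∑ x, c.ker π l x * (c.lam θ μ (l ++ [x]) * c.lam θ ν (l ++ [x]))) *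
          Real.exp (-(cost l + cst l)) := by
          rw [Finset.sum_mul]; exact Finset.sum_congr rfl fun x _ => by ring
      _ ≤ (c.lam θ μ l * c.lam θ ν l * (1 + cst l)) * Real.exp (-(cost l + cst l)) :=
          mul_le_mul_of_nonneg_right h (Real.exp_pos _).le
      _ ≤ (c.lam θ μ l * c.lam θ ν l * Real.exp (cst l)) * Real.exp (-(cost l + cst l)) := by
          gcongr; linarith [Real.add_one_le_exp (cst l)]
      _ = _ := by
          rw [mul_assoc, ← Real.exp_add]; congr 2; ring
  · simp [cost, lam]

end Cfg

/-! ### Values and the loss of a policy -/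

namespace Cfg
variable {S O A : Type} [Fintype S] [Fintype O] [Fintype A] [DecidableEq A] {L : ℕ}
variable (c : Cfg S O A L)

lemma refSt_snoc (l : List (O × A)) (x) :
    c.refSt (l ++ [x]) = c.stepRef l.length (c.refSt l) x.2 := by
  unfold refSt; rw [path_snoc]

/-- The lock is entered at index `d + K` at the latest. -/
lemma refSt_of_length (l : List (O × A)) (hl : c.d + c.K < l.length) :
    c.refSt l = Sum.inr false := by
  induction l using List.reverseRecOn with
  | nil => simp at hl
  | append_singleton l x ih =>
    simp only [List.length_append, List.length_cons, List.length_nil, zero_add] at hl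
    rw [refSt_snoc]
    rcases h : c.refSt l with y | b
    · simp only [stepRef, leafStep]
      rw [if_neg (by omega), if_neg (by omega)]
    · rfl

/-- Expected weight of the live event at the last index: the excess reward in units of `ε / 4`. -/
def liveVal (θ : c.Secret) (μ : Fin c.m → Bool) (π : Policy O A) : ℝ :=
  ∑ τ : Fin L → O × A, seqProb (c.ker π) τ * (c.lik θ μ (List.ofFn τ) * c.lv θ (List.ofFn τ))

lemma value_eq (θ : c.Secret) (hv : θ.Valid) (μ) (π : Policy O A) :
    (c.model θ μ).value π = 1 / 2 + c.ε / 4 * c.liveVal θ μ π := by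
  have hr : ∀ τ : Fin (L + 1) → O × A,
      ∑ h : Fin (L + 1), (c.model θ μ).reward (h.1 + 1) (τ h).1 (τ h).2 =
        if c.good (c.eO (τ (Fin.last L)).1) = true then 1 else 0 := by
    intro τ
    rw [Fin.sum_univ_castSucc]
    have : ∀ i : Fin L, (c.model θ μ).reward ((i.castSucc : Fin (L + 1)).1 + 1)
        (τ i.castSucc).1 (τ i.castSucc).2 = 0 := by
      intro i
      have := i.2
      simp only [model]
      rw [if_neg]
      rintro ⟨h, -⟩
      simp at h
      omega
    rw [Finset.sum_congr rfl fun i _ => this i]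
    simp [model]
  unfold POMDP.value
  simp only [hr, c.trajProb_eq θ hv]
  rw [sum_snoc]
  simp only [seqProb_snoc, ofFn_snoc, Fin.snoc_last]
  have hstep : ∀ τ : Fin L → O × A, ∑ x : O × A, seqProb (c.ker π) τ * c.ker π (List.ofFn τ) x *
      c.lam θ μ (List.ofFn τ ++ [x]) * (if c.good (c.eO x.1) = true then 1 else 0) =
      1 / 2 * (seqProb (c.ker π) τ * c.lam θ μ (List.ofFn τ)) + c.ε / 4 *
        (seqProb (c.ker π) τ * (c.lik θ μ (List.ofFn τ) * c.lv θ (List.ofFn τ))) := by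
    intro τ
    have hL : (List.ofFn τ).length = L := by simp
    have hd := c.hdK
    have hst := c.refSt_of_length (List.ofFn τ) (by rw [hL]; exact hd)
    have g1 := c.ker_sum_obs π (List.ofFn τ) (fun o => if c.good o = true then 1 else 0)
    have g2 := c.ker_sum_obs π (List.ofFn τ)
      (fun o => c.tilt μ L o * if c.good o = true then 1 else 0)
    rw [hst, c.sum_q_good] at g1
    rw [hst, c.sum_q_tilt_good] at g2
    simp only [lam_snoc, hL]
    calc _ = seqProb (c.ker π) τ * c.lam θ μ (List.ofFn τ) *
          (∑ x, c.ker π (List.ofFn τ) x * (if c.good (c.eO x.1) = true then 1 else 0)) +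
          seqProb (c.ker π) τ * (c.ε * c.lik θ μ (List.ofFn τ) * c.lv θ (List.ofFn τ)) *
          ∑ x, c.ker π (List.ofFn τ) x *
            (c.tilt μ L (c.eO x.1) * (if c.good (c.eO x.1) = true then 1 else 0)) := by
          rw [Finset.mul_sum, Finset.mul_sum, ← Finset.sum_add_distrib]
          exact Finset.sum_congr rfl fun x _ => by ring
      _ = _ := by rw [g1, g2]; ring
  rw [Finset.sum_congr rfl fun τ _ => hstep τ, Finset.sum_add_distrib, ← Finset.mul_sum,
    ← Finset.mul_sum, c.sum_lam θ hv]
  unfold liveVal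
  ring

lemma liveVal_le_one (θ : c.Secret) (hv : θ.Valid) (μ) (π : Policy O A) : c.liveVal θ μ π ≤ 1 := by
  rw [← c.sum_lik θ hv μ π L]
  refine Finset.sum_le_sum fun τ _ => mul_le_mul_of_nonneg_left ?_
    (seqProb_nonneg _ (c.ker_nonneg π) _)
  exact (mul_le_mul_of_nonneg_left (c.lv_le_one θ _) (c.lik_nonneg _ _ _)).trans_eq (mul_one _)

/-- The optimal action at index `i`: walk to the rewarding leaf, wait, then type the password. -/
def optAct (θ : c.Secret) (i : ℕ) : A :=
  if i < c.d then (if θ.1.1.testBit i then c.a1 else c.a0)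
  else if i < c.d + θ.2.1.1 then c.a0 else θ.pw i

/-- The policy that plays `optAct`. -/
def optPol (θ : c.Secret) : Policy O A where
  act l _ a := if a = c.optAct θ l.length then 1 else 0
  act_nonneg l _ a := by split_ifs <;> norm_num
  act_sum l _ := by simp

lemma nav_opt (θ : c.Secret) (i : ℕ) (x : Fin c.n) (hi : i < c.d) (hx : x.1 = θ.1.1 % 2 ^ i) :
    (c.nav i x (c.optAct θ i)).1 = θ.1.1 % 2 ^ (i + 1) := by
  have h2 : θ.1.1 % 2 ^ (i + 1) ≤ θ.1.1 := Nat.mod_le _ _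
  have h3 := θ.1.2
  have h1 : θ.1.1 % 2 ^ (i + 1) = θ.1.1 % 2 ^ i + 2 ^ i * (θ.1.1.testBit i).toNat := by
    rw [Nat.mod_pow_succ, Nat.toNat_testBit]
  unfold nav optAct
  rw [if_pos hi]
  have ha := c.ha
  by_cases hb : θ.1.1.testBit i = true
  · rw [hb] at h1 ⊢
    simp only [Bool.toNat_true, mul_one] at h1
    rw [dif_pos (by rw [hx]; omega)]
    simp [hx]; omega
  · rw [Bool.not_eq_true] at hb
    rw [hb] at h1 ⊢
    simp only [Bool.toNat_false, mul_zero] at h1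
    split_ifs <;> simp_all

/-- The optimal actions build up the binary digits of the secret leaf, then keep the good state. -/
lemma path_opt (θ : c.Secret) {N : ℕ} (τ : Fin N → O × A)
    (hτ : ∀ i : Fin N, (τ i).2 = c.optAct θ i.1) (k : ℕ) (hk : k ≤ N) (hkL : k ≤ L) :
    (k ≤ c.d + θ.2.1.1 → ∃ x : Fin c.n, x.1 = θ.1.1 % 2 ^ (min k c.d) ∧
      c.path (c.step1 θ) ((List.ofFn τ).take k) = Sum.inl x) ∧
    (c.d + θ.2.1.1 < k → c.path (c.step1 θ) ((List.ofFn τ).take k) = Sum.inr true) := by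
  have hK := θ.2.1.2
  have hdK := c.hdK
  induction k with
  | zero =>
    refine ⟨fun _ => ⟨c.x0, ?_, rfl⟩, fun h => by omega⟩
    rw [c.hx0]; simp [Nat.mod_one]
  | succ k ih =>
    obtain ⟨ih1, ih2⟩ := ih (by omega) (by omega)
    rw [take_ofFn_succ τ k (by omega), path_snoc, length_take_ofFn τ k (by omega), hτ]
    constructor
    · intro h
      obtain ⟨x, hx, hp⟩ := ih1 (by omega)
      rw [hp]
      unfold step1
      rw [if_neg (by omega)]
      simp only [step0, leafStep]
      by_cases hd : k < c.d
      · rw [if_pos hd]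
        refine ⟨_, ?_, rfl⟩
        rw [min_eq_left (by omega)]
        exact c.nav_opt θ k x hd (by rw [hx, min_eq_left (by omega)])
      · rw [if_neg hd, if_pos]
        · exact ⟨x, by rw [hx, min_eq_right (by omega), min_eq_right (by omega)], rfl⟩
        · refine ⟨by omega, ?_⟩
          unfold optAct
          rw [if_neg hd, if_pos (by omega)]
    · intro h
      have ho : c.optAct θ k = θ.pw k := by
        unfold optAct
        rw [if_neg (by omega), if_neg (by omega)]
      rcases Nat.lt_or_ge (c.d + θ.2.1.1) k with h4 | h4
      · rw [ih2 h4]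
        unfold step1
        rw [if_neg (by omega)]
        simp [step0, ho]
      · obtain ⟨x, hx, hp⟩ := ih1 h4
        rw [hp]
        unfold step1
        rw [if_pos]
        refine ⟨by omega, ?_, ho⟩
        congr 1
        apply Fin.ext
        rw [hx, min_eq_right (by omega)]
        exact Nat.mod_eq_of_lt (lt_of_lt_of_le θ.1.2 c.hn)

lemma liveVal_opt (θ : c.Secret) (hv : θ.Valid) (μ) : c.liveVal θ μ (c.optPol θ) = 1 := by
  rw [← c.sum_lik θ hv μ (c.optPol θ) L]
  refine Finset.sum_congr rfl fun τ _ => ?_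
  by_cases h0 : seqProb (c.ker (c.optPol θ)) τ = 0
  · rw [h0, zero_mul, zero_mul]
  · have hτ : ∀ i : Fin L, (τ i).2 = c.optAct θ i.1 := by
      intro i
      by_contra hne
      apply h0
      refine Finset.prod_eq_zero (mem_univ i) ?_
      simp only [ker, optPol]
      rw [length_take_ofFn τ i.1 i.2.le, if_neg hne, mul_zero]
    have hK := θ.2.1.2
    have hdK := c.hdK
    have := (c.path_opt θ τ hτ L le_rfl le_rfl).2 (by omega)
    rw [List.take_of_length_le (by simp)] at this
    have hl : c.lv θ (List.ofFn τ) = 1 := if_pos this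
    rw [hl, mul_one]

/-- The loss of a policy is at least the probability of not being live at the end, times `ε / 10`. -/
lemma gap_le (θ : c.Secret) (hv : θ.Valid) (μ) (π : Policy O A) :
    c.ε / 10 * ∑ τ : Fin (L + 1) → O × A, (c.model θ μ).trajProb π τ *
        (1 - c.lv θ ((List.ofFn τ).take L)) ≤
      (c.model θ μ).optValue - (c.model θ μ).value π := by
  have hε0 := c.hε0
  have hε := c.hε
  have hopt : 1 / 2 + c.ε / 4 ≤ (c.model θ μ).optValue := by
    have hb : BddAbove (Set.range fun π : Policy O A => (c.model θ μ).value π) := by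
      refine ⟨1 / 2 + c.ε / 4, ?_⟩
      rintro _ ⟨π, rfl⟩
      simp only
      rw [c.value_eq θ hv]
      have := c.liveVal_le_one θ hv μ π
      nlinarith
    have := le_ciSup hb (c.optPol θ)
    rw [c.value_eq θ hv, c.liveVal_opt θ hv, mul_one] at this
    exact this
  rw [c.value_eq θ hv]
  have h1 : ∑ τ : Fin (L + 1) → O × A, (c.model θ μ).trajProb π τ *
        (1 - c.lv θ ((List.ofFn τ).take L)) =
      ∑ τ : Fin L → O × A, seqProb (c.ker π) τ *
        (c.lam θ μ (List.ofFn τ) * (1 - c.lv θ (List.ofFn τ))) := by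
    simp only [c.trajProb_eq θ hv]
    rw [sum_snoc]
    refine Finset.sum_congr rfl fun τ _ => ?_
    simp only [take_snoc_last]
    simp only [seqProb_snoc, ofFn_snoc]
    rw [← c.ker_lam θ hv μ π (List.ofFn τ), Finset.sum_mul, Finset.mul_sum]
    exact Finset.sum_congr rfl fun x _ => by ring
  have h2 : 1 - c.liveVal θ μ π = ∑ τ : Fin L → O × A, seqProb (c.ker π) τ *
        (c.lik θ μ (List.ofFn τ) * (1 - c.lv θ (List.ofFn τ))) := by
    have h := c.sum_lik θ hv μ π L
    unfold liveVal
    simp only [mul_sub, mul_one, Finset.sum_sub_distrib]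
    rw [h]
  have h3 : ∑ τ : Fin L → O × A, seqProb (c.ker π) τ *
        (c.lam θ μ (List.ofFn τ) * (1 - c.lv θ (List.ofFn τ))) ≤
      5 / 2 * (1 - c.liveVal θ μ π) := by
    rw [h2, Finset.mul_sum]
    refine Finset.sum_le_sum fun τ _ => ?_
    have b := (c.lik_bounds θ μ (List.ofFn τ) (by simp)).1
    have hl := c.lv_le_one θ (List.ofFn τ)
    have hlam : c.lam θ μ (List.ofFn τ) ≤ 5 / 2 * c.lik θ μ (List.ofFn τ) := by
      unfold lam; nlinarith
    have := seqProb_nonneg _ (c.ker_nonneg π) τ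
    calc _ ≤ seqProb (c.ker π) τ *
          (5 / 2 * c.lik θ μ (List.ofFn τ) * (1 - c.lv θ (List.ofFn τ))) := by
          gcongr
      _ = _ := by ring
  rw [h1]
  nlinarith

end Cfg

/-! ### Counting the secrets that make a trajectory live -/

/-- Passwords agreeing with `f` on the indices `[D, k)`. -/
lemma card_agree {A : Type} [Fintype A] [DecidableEq A] {L : ℕ} (D k : ℕ) (hk : k ≤ L)
    (f : Fin L → A) :
    (univ.filter fun p : Fin L → A => ∀ i : Fin L, D ≤ i.1 → i.1 < k → p i = f i).card =
      Fintype.card A ^ (L - (k - D)) := by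
  have h1 : (univ.filter fun p : Fin L → A => ∀ i : Fin L, D ≤ i.1 → i.1 < k → p i = f i) =
      Fintype.piFinset fun i : Fin L => if D ≤ i.1 ∧ i.1 < k then {f i} else univ := by
    ext p
    simp only [mem_filter, mem_univ, true_and, Fintype.mem_piFinset]
    refine forall_congr' fun i => ?_
    split_ifs with h
    · simp [h.1, h.2]
    · simp only [mem_univ, iff_true]
      intro a b; exact absurd ⟨a, b⟩ h
  rw [h1, Fintype.card_piFinset]
  have h2 : ∀ i : Fin L, (if D ≤ i.1 ∧ i.1 < k then ({f i} : Finset A) else univ).card =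
      if D ≤ i.1 ∧ i.1 < k then 1 else Fintype.card A := by
    intro i; split_ifs <;> simp
  rw [Finset.prod_congr rfl fun i _ => h2 i,
    ← Finset.prod_range (fun i => if D ≤ i ∧ i < k then 1 else Fintype.card A), Finset.prod_ite,
    Finset.prod_const_one, one_mul, Finset.prod_const]
  congr 1
  have h3 : (range L).filter (fun i => ¬ (D ≤ i ∧ i < k)) = range L \ Ico D k := by
    ext i; simp
  rw [h3, Finset.card_sdiff_of_subset, Nat.card_Ico, Finset.card_range]
  intro i
  simp only [mem_Ico, mem_range]
  omega

namespace Cfg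
variable {S O A : Type} [Fintype S] [Fintype O] [Fintype A] [DecidableEq A] {L : ℕ}
variable (c : Cfg S O A L)

instance (θ : c.Secret) : Decidable θ.Valid := inferInstanceAs (Decidable (_ ≠ _))

/-- A live trajectory has entered at the secret leaf and index and typed the password since. -/
lemma live_spec (θ : c.Secret) (hv : θ.Valid) {N : ℕ} (τ : Fin N → O × A) (k : ℕ) (hk : k ≤ N)
    (h : c.Live θ ((List.ofFn τ).take k)) :
    c.d + θ.2.1.1 < k ∧ c.refSt ((List.ofFn τ).take (c.d + θ.2.1.1)) = Sum.inl θ.1 ∧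
      ∀ i (hi : i < N), c.d + θ.2.1.1 ≤ i → i < k → (τ ⟨i, hi⟩).2 = θ.pw i := by
  induction k with
  | zero => simp [Live] at h
  | succ k ih =>
    unfold Live at h
    rw [take_ofFn_succ τ k (by omega), path_snoc, length_take_ofFn τ k (by omega)] at h
    generalize hp : c.path (c.step1 θ) ((List.ofFn τ).take k) = s at h
    unfold step1 at h
    split_ifs at h with he
    · obtain ⟨h1, h2, h3⟩ := he
      subst h1
      refine ⟨by omega, ?_, ?_⟩
      · rcases c.path_step1 θ hv ((List.ofFn τ).take (c.d + θ.2.1.1)) with h4 | h4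
        · rw [← h4, hp, h2]
        · have h5 := h4.1
          unfold Live at h5
          rw [hp, h2] at h5
          simp at h5
      · intro i hi h4 h5
        obtain rfl : i = c.d + θ.2.1.1 := by omega
        exact h3
    · rcases s with y | b
      · simp only [step0, leafStep] at h
        all_goals (split_ifs at h; simp at h)
      · simp only [step0, Sum.inr.injEq, Bool.and_eq_true, decide_eq_true_eq] at h
        obtain ⟨hb, h3⟩ := h
        subst hb
        obtain ⟨i1, i2, i3⟩ := ih (by omega) hp
        refine ⟨by omega, i2, fun i hi h4 h5 => ?_⟩
        rcases Nat.lt_or_ge i k with h6 | h6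
        · exact i3 i hi h4 h6
        · obtain rfl : i = k := by omega
          exact h3

lemma refSt_after {N : ℕ} (τ : Fin N → O × A) (D : ℕ) (hD : D < N) (x : Fin c.n) (hd : c.d ≤ D)
    (hx : c.refSt ((List.ofFn τ).take D) = Sum.inl x) (ha : (τ ⟨D, hD⟩).2 ≠ c.a0) (k : ℕ)
    (hk : D < k) (hkN : k ≤ N) : c.refSt ((List.ofFn τ).take k) = Sum.inr false := by
  induction k with
  | zero => omega
  | succ k ih =>
    rw [take_ofFn_succ τ k (by omega), refSt_snoc, length_take_ofFn τ k (by omega)]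
    rcases Nat.lt_or_ge D k with h | h
    · rw [ih h (by omega)]; rfl
    · obtain rfl : D = k := by omega
      rw [hx]
      simp only [stepRef, leafStep]
      rw [if_neg (by omega), if_neg (fun h => ha h.2)]

/-- For a fixed trajectory all secrets that make it live share the leaf and the entry index. -/
lemma secret_unique {N : ℕ} (τ : Fin N → O × A) (θ θ' : c.Secret) (hv : θ.Valid) (hv' : θ'.Valid)
    (k k' : ℕ) (hk : k ≤ N) (hk' : k' ≤ N) (h : c.Live θ ((List.ofFn τ).take k))
    (h' : c.Live θ' ((List.ofFn τ).take k')) : θ.1 = θ'.1 ∧ θ.2.1 = θ'.2.1 := by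
  obtain ⟨a1, a2, a3⟩ := c.live_spec θ hv τ k hk h
  obtain ⟨b1, b2, b3⟩ := c.live_spec θ' hv' τ k' hk' h'
  rcases lt_trichotomy θ.2.1.1 θ'.2.1.1 with hj | hj | hj
  · have := c.refSt_after τ (c.d + θ.2.1.1) (by omega) θ.1 (by omega) a2
      (by rw [a3 _ _ le_rfl a1]; exact hv) (c.d + θ'.2.1.1) (by omega) (by omega)
    rw [b2] at this; simp at this
  · refine ⟨?_, Fin.ext hj⟩
    rw [hj, b2] at a2
    exact (Sum.inl.inj a2).symm
  · have := c.refSt_after τ (c.d + θ'.2.1.1) (by omega) θ'.1 (by omega) b2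
      (by rw [b3 _ _ le_rfl b1]; exact hv') (c.d + θ.2.1.1) (by omega) (by omega)
    rw [a2] at this; simp at this

/-- The valid secrets. -/
def valids : Finset c.Secret := univ.filter fun θ => θ.Valid

lemma mem_valids (θ : c.Secret) : θ ∈ c.valids ↔ θ.Valid := by simp [valids]

/-- Number of secrets that make a given trajectory live at each index: `j` is the entry index of the
trajectory relative to `d`, and the password is prescribed from there on. -/
lemma count_live (hK : 0 < c.K) (τ : Fin (L + 1) → O × A) :
    ∃ j < c.K, ∀ k ≤ L, ∑ θ ∈ c.valids, c.lv θ ((List.ofFn τ).take k) ≤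
      if c.d + j < k then (Fintype.card A : ℝ) ^ (L - (k - (c.d + j))) else 0 := by
  classical
  by_cases hex : ∃ θ : c.Secret, θ.Valid ∧ ∃ k ≤ L, c.Live θ ((List.ofFn τ).take k)
  · obtain ⟨θ0, hv0, k0, hk0, hl0⟩ := hex
    refine ⟨θ0.2.1.1, θ0.2.1.2, fun k hk => ?_⟩
    have hsame : ∀ θ : c.Secret, θ.Valid → c.Live θ ((List.ofFn τ).take k) →
        θ.1 = θ0.1 ∧ θ.2.1 = θ0.2.1 := fun θ hv hl =>
      c.secret_unique τ θ θ0 hv hv0 k k0 (by omega) (by omega) hl hl0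
    unfold lv
    rw [Finset.sum_boole]
    split_ifs with hdk
    · rw [← Nat.cast_pow, ← card_agree (c.d + θ0.2.1.1) k hk
        (fun i : Fin L => (τ i.castSucc).2)]
      norm_cast
      refine Finset.card_le_card_of_injOn (fun θ => θ.2.2) ?_ ?_
      · intro θ hθ
        simp only [coe_filter, Set.mem_ofPred_eq, mem_valids] at hθ
        obtain ⟨hv, hl⟩ := hθ
        have hs := (hsame θ hv hl).2
        simp only [coe_filter, mem_univ, true_and, Set.mem_ofPred_eq]
        intro i h1 h2
        have := (c.live_spec θ hv τ k (by omega) hl).2.2 i.1 (by omega) (by rw [hs]; exact h1) h2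
        rw [show i.castSucc = (⟨i.1, by omega⟩ : Fin (L + 1)) from rfl, this]
        simp [Secret.pw]
      · intro θ hθ θ' hθ' he
        simp only [coe_filter, Set.mem_ofPred_eq, mem_valids] at hθ hθ'
        have e1 := hsame θ hθ.1 hθ.2
        have e2 := hsame θ' hθ'.1 hθ'.2
        exact Prod.ext (e1.1.trans e2.1.symm) (Prod.ext (e1.2.trans e2.2.symm) he)
    · rw [Finset.filter_false_of_mem]
      · simp
      · intro θ hθ hl
        rw [mem_valids] at hθ
        have := (c.live_spec θ hθ τ k (by omega) hl).1
        rw [(hsame θ hθ hl).2] at this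
        omega
  · refine ⟨0, hK, fun k hk => ?_⟩
    have : ∑ θ ∈ c.valids, c.lv θ ((List.ofFn τ).take k) = 0 := by
      refine Finset.sum_eq_zero fun θ hθ => if_neg fun hl => hex ⟨θ, (c.mem_valids θ).1 hθ, k, hk, hl⟩
    rw [this]
    split_ifs <;> positivity

/-- Sum of the episode weights over all secrets, for a fixed trajectory. -/
lemma sum_wt_le (hK : 0 < c.K) (hA : 3 ≤ Fintype.card A) {a b : ℝ} (ha : 0 ≤ a) (hb : 0 ≤ b)
    (τ : Fin (L + 1) → O × A) :
    ∑ θ ∈ c.valids, c.wt θ a b τ ≤ (Fintype.card A : ℝ) ^ L *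
      (a * (3 / (2 * Fintype.card A)) + b / (Fintype.card A : ℝ) ^ (L + 1 - c.d - c.K)) := by
  obtain ⟨j, hj, hc⟩ := c.count_live hK τ
  have hdK := c.hdK
  have hA' : (3 : ℝ) ≤ Fintype.card A := by exact_mod_cast hA
  set q : ℝ := (Fintype.card A : ℝ) with hq
  have e1 : ∑ θ ∈ c.valids, c.wt θ a b τ = ∑ i : Fin (L + 1),
      (∑ θ ∈ c.valids, c.lv θ ((List.ofFn τ).take i.1)) * if i.1 = L then b else a := by
    unfold wt
    rw [Finset.sum_comm]
    exact Finset.sum_congr rfl fun i _ => (Finset.sum_mul _ _ _).symm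
  rw [e1, Fin.sum_univ_castSucc]
  have hne : ∀ i : Fin L, ¬ (i.castSucc : Fin (L + 1)).1 = L := by
    intro i; have := i.2; simp; omega
  have h1 : ∑ i : Fin L, (∑ θ ∈ c.valids, c.lv θ ((List.ofFn τ).take (i.castSucc : Fin (L + 1)).1)) *
      (if (i.castSucc : Fin (L + 1)).1 = L then b else a) ≤ q ^ L * (a * (3 / (2 * q))) := by
    have h2 : ∀ i : Fin L, (∑ θ ∈ c.valids,
        c.lv θ ((List.ofFn τ).take (i.castSucc : Fin (L + 1)).1)) *
        (if (i.castSucc : Fin (L + 1)).1 = L then b else a) ≤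
        q ^ L * a * (if c.d + j < i.1 then (1 / q) ^ (i.1 - (c.d + j)) else 0) := by
      intro i
      rw [if_neg (hne i)]
      have h3 := hc i.1 i.2.le
      calc _ ≤ (if c.d + j < i.1 then q ^ (L - (i.1 - (c.d + j))) else 0) * a :=
            mul_le_mul_of_nonneg_right h3 ha
        _ = _ := by
            split_ifs with h4
            · have : q ^ L = q ^ (L - (i.1 - (c.d + j))) * q ^ (i.1 - (c.d + j)) := by
                rw [← pow_add]; congr 1; omega
              rw [this, div_pow, one_pow]
              field_simp
            · ring
    refine (Finset.sum_le_sum fun i _ => h2 i).trans ?_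
    rw [← Finset.mul_sum, mul_assoc]
    refine mul_le_mul_of_nonneg_left (mul_le_mul_of_nonneg_left ?_ ha) (by positivity)
    -- geometric series
    have hgeo : ∀ n : ℕ, ∑ i ∈ range n, (if c.d + j < i then (1 / q) ^ (i - (c.d + j)) else 0) ≤
        1 / (q - 1) * (1 - (1 / q) ^ (n - 1 - (c.d + j))) := by
      intro n
      induction n with
      | zero => simp
      | succ n ih =>
        rw [Finset.sum_range_succ]
        split_ifs with h
        · refine (add_le_add_left ih _).trans (le_of_eq ?_)
          have e : n + 1 - 1 - (c.d + j) = n - 1 - (c.d + j) + 1 := by omega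
          have e' : n - (c.d + j) = n - 1 - (c.d + j) + 1 := by omega
          rw [e, e', pow_succ]
          have : q - 1 ≠ 0 := by linarith
          field_simp
          ring
        · have e : n + 1 - 1 - (c.d + j) = 0 := by omega
          have e' : n - 1 - (c.d + j) = 0 := by omega
          rw [e, add_zero]
          rw [e'] at ih
          exact ih
    have h5 := hgeo L
    rw [Finset.sum_range] at h5
    refine h5.trans ?_
    have h6 : 0 ≤ (1 / q) ^ (L - 1 - (c.d + j)) := by positivity
    calc 1 / (q - 1) * (1 - (1 / q) ^ (L - 1 - (c.d + j))) ≤ 1 / (q - 1) * 1 := by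
          apply mul_le_mul_of_nonneg_left (by linarith)
          apply div_nonneg <;> linarith
      _ ≤ 3 / (2 * q) := by
          rw [mul_one, div_le_div_iff₀ (by linarith) (by linarith)]; linarith
  have h2 : (∑ θ ∈ c.valids, c.lv θ ((List.ofFn τ).take (Fin.last L).1)) *
      (if (Fin.last L).1 = L then b else a) ≤ q ^ L * (b / q ^ (L + 1 - c.d - c.K)) := by
    rw [if_pos (by simp)]
    have h3 := hc L le_rfl
    rw [if_pos (by omega)] at h3
    calc _ ≤ q ^ (L - (L - (c.d + j))) * b := mul_le_mul_of_nonneg_right h3 hb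
      _ ≤ q ^ (c.d + c.K - 1) * b := by
          refine mul_le_mul_of_nonneg_right (pow_le_pow_right₀ (by linarith) (by omega)) hb
      _ = _ := by
          have : q ^ L = q ^ (c.d + c.K - 1) * q ^ (L + 1 - c.d - c.K) := by
            rw [← pow_add]; congr 1; omega
          rw [this]; field_simp
  rw [mul_add]
  exact add_le_add h1 h2

/-- At most a third of the secrets are invalid, as the entry letter is invalid with
probability `1 / |A|`. -/
lemma card_valids (hA : 3 ≤ Fintype.card A) :
    2 / 3 * ((c.n : ℝ) * c.K * (Fintype.card A : ℝ) ^ L) ≤ c.valids.card := by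
  classical
  have hdK := c.hdK
  have hinv : (univ.filter fun θ : c.Secret => ¬ θ.Valid).card =
      c.n * (c.K * Fintype.card A ^ (L - 1)) := by
    rw [Finset.card_filter, Fintype.sum_prod_type]
    simp only [Fintype.sum_prod_type]
    have : ∀ (x : Fin c.n) (j : Fin c.K), (∑ p : Fin L → A,
        if ¬ Secret.Valid (c := c) (x, j, p) then 1 else 0) = Fintype.card A ^ (L - 1) := by
      intro x j
      have hj := j.2
      have h := card_agree (c.d + j.1) (c.d + j.1 + 1) (by omega) (fun _ : Fin L => c.a0)
      rw [show L - (c.d + j.1 + 1 - (c.d + j.1)) = L - 1 by omega] at h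
      rw [← h, Finset.card_filter]
      refine Finset.sum_congr rfl fun p _ => ?_
      refine if_congr ?_ rfl rfl
      have hlt : c.d + j.1 < L := by omega
      simp only [Secret.Valid, Secret.pw, hlt, dif_pos, ne_eq, not_not]
      constructor
      · intro h1 i h2 h3
        have : i = ⟨c.d + j.1, hlt⟩ := Fin.ext (by simp; omega)
        rw [this]; exact h1
      · intro h1; exact h1 ⟨_, hlt⟩ le_rfl (by simp)
    rw [Finset.sum_congr rfl fun x _ => Finset.sum_congr rfl fun j _ => this x j]
    simp
  have htot := Finset.card_filter_add_card_filter_not (s := (univ : Finset c.Secret))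
    (fun θ => θ.Valid)
  rw [hinv] at htot
  have hcard : (univ : Finset c.Secret).card = c.n * (c.K * Fintype.card A ^ L) := by
    simp [Secret, Fintype.card_prod]
  rw [hcard] at htot
  have hA' : (3 : ℝ) ≤ Fintype.card A := by exact_mod_cast hA
  have ht : (c.valids.card : ℝ) + c.n * (c.K * (Fintype.card A : ℝ) ^ (L - 1)) =
      c.n * (c.K * (Fintype.card A : ℝ) ^ L) := by exact_mod_cast htot
  have hp : (Fintype.card A : ℝ) ^ L = (Fintype.card A : ℝ) ^ (L - 1) * Fintype.card A := by
    rw [← pow_succ]; congr 1; omega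
  have h0 : (0 : ℝ) ≤ c.n * (c.K * (Fintype.card A : ℝ) ^ (L - 1)) := by positivity
  rw [hp] at ht ⊢
  nlinarith

end Cfg

/-! ### The regret bound in terms of the construction -/

namespace Cfg
variable {S O A : Type} [Fintype S] [Fintype O] [Fintype A] [DecidableEq A] {L : ℕ}
variable (c : Cfg S O A L)

/-- Some secret has small expected weight under the reference law, by averaging. -/
lemma exists_secret (hK : 0 < c.K) (hA : 3 ≤ Fintype.card A) {a b : ℝ} (ha : 0 ≤ a) (hb : 0 ≤ b)
    (T : ℕ) (κ : List (Fin (L + 1) → O × A) → (Fin (L + 1) → O × A) → ℝ)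
    (hκ : ∀ l x, 0 ≤ κ l x) (h1 : ∀ l, ∑ x, κ l x = 1)
    (hsmall : T * (a * (3 / (2 * Fintype.card A)) +
      b / (Fintype.card A : ℝ) ^ (L + 1 - c.d - c.K)) ≤ 1 / 64 * (2 / 3 * (c.n * c.K))) :
    ∃ θ : c.Secret, θ.Valid ∧
      ∑ τ : Fin T → Fin (L + 1) → O × A, seqProb κ τ * ∑ t, c.wt θ a b (τ t) ≤ 1 / 64 := by
  have hA' : (3 : ℝ) ≤ Fintype.card A := by exact_mod_cast hA
  have hAL : (0 : ℝ) < (Fintype.card A : ℝ) ^ L := by positivity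
  have hcard := c.card_valids hA
  have hK' : (0 : ℝ) < c.K := by exact_mod_cast hK
  have hn' : (0 : ℝ) < c.n := by exact_mod_cast (Nat.zero_le _).trans_lt c.x0.2
  set q := a * (3 / (2 * Fintype.card A)) + b / (Fintype.card A : ℝ) ^ (L + 1 - c.d - c.K) with hq
  have hne : c.valids.Nonempty := by
    rw [← Finset.card_pos]
    have : (0 : ℝ) < c.valids.card := lt_of_lt_of_le (by positivity) hcard
    exact_mod_cast this
  have hsum : ∑ θ ∈ c.valids, ∑ τ : Fin T → Fin (L + 1) → O × A,
      seqProb κ τ * ∑ t, c.wt θ a b (τ t) ≤ ∑ θ ∈ c.valids, (1 / 64 : ℝ) := by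
    calc _ = ∑ τ : Fin T → Fin (L + 1) → O × A,
          seqProb κ τ * ∑ t, ∑ θ ∈ c.valids, c.wt θ a b (τ t) := by
          rw [Finset.sum_comm]
          refine Finset.sum_congr rfl fun τ _ => ?_
          rw [← Finset.mul_sum, Finset.sum_comm]
      _ ≤ ∑ τ : Fin T → Fin (L + 1) → O × A,
          seqProb κ τ * (T * ((Fintype.card A : ℝ) ^ L * q)) := by
          refine Finset.sum_le_sum fun τ _ => mul_le_mul_of_nonneg_left ?_ (seqProb_nonneg _ hκ _)
          refine (Finset.sum_le_sum fun t _ => c.sum_wt_le hK hA ha hb (τ t)).trans_eq ?_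
          simp [hq]
      _ = (Fintype.card A : ℝ) ^ L * (T * q) := by
          rw [← Finset.sum_mul, seq_total κ h1]; ring
      _ ≤ (Fintype.card A : ℝ) ^ L * (1 / 64 * (2 / 3 * (c.n * c.K))) := by gcongr
      _ ≤ _ := by
          rw [Finset.sum_const, nsmul_eq_mul]; linarith
  obtain ⟨θ, hθ, h⟩ := Finset.exists_le_of_sum_le hne hsum
  exact ⟨θ, (c.mem_valids θ).1 hθ, h⟩

/-- The regret lower bound in terms of the parameters of the construction: with the episode weights
`a = 64 ε² σ² / √m` and `b = 16 ε² + 2 / T`, a secret of small expected weight and a pattern under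
which the weight stays below `1` are found, and then half of the episodes are not live at the end. -/
lemma regret_lower (hK : 0 < c.K) (hA : 3 ≤ Fintype.card A) (hε' : c.ε ≤ 1 / 100)
    (T : ℕ) (hT : 1 ≤ T)
    (hsmall : T * (64 * c.ε ^ 2 * c.σ ^ 2 / Real.sqrt c.m * (3 / (2 * Fintype.card A)) +
      (16 * c.ε ^ 2 + 2 / T) / (Fintype.card A : ℝ) ^ (L + 1 - c.d - c.K)) ≤
        1 / 64 * (2 / 3 * (c.n * c.K)))
    (𝔄 : Algorithm O A (L + 1)) :
    ∃ (θ : c.Secret) (μ : Fin c.m → Bool), c.ε * T / 40 ≤ (c.model θ μ).expRegret 𝔄 T := by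
  have hT' : (1 : ℝ) ≤ T := by exact_mod_cast hT
  have hε0 := c.hε0
  have hσ0 := c.hσ0
  have hm := c.m_pos
  have hm1 : 1 ≤ Real.sqrt c.m := by
    rw [Real.one_le_sqrt]; exact_mod_cast c.hm
  set a := 64 * c.ε ^ 2 * c.σ ^ 2 / Real.sqrt c.m with ha'
  set b := 16 * c.ε ^ 2 + 2 / (T : ℝ) with hb'
  have ha : 0 ≤ a := by positivity
  have hb : 0 ≤ b := by positivity
  have hε2 : c.ε ^ 2 ≤ 1 / 10000 := by nlinarith
  have hab : L * a + b ≤ 3 := by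
    have h1 : a ≤ 64 * c.ε ^ 2 * c.σ ^ 2 := div_le_self (by positivity) hm1
    have h2 : L * c.σ ≤ 3 / 5 := by have := c.hσ; linarith
    have h3 := c.σ_le
    have h4 : L * c.σ ^ 2 ≤ 1 := by
      have : 0 ≤ L * c.σ := by positivity
      nlinarith
    have h5 : L * a ≤ 64 * c.ε ^ 2 := by
      calc L * a ≤ L * (64 * c.ε ^ 2 * c.σ ^ 2) := by gcongr
        _ = 64 * c.ε ^ 2 * (L * c.σ ^ 2) := by ring
        _ ≤ 64 * c.ε ^ 2 * 1 := by gcongr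
        _ = _ := mul_one _
    have h6 : 2 / (T : ℝ) ≤ 2 := div_le_self (by norm_num) hT'
    linarith
  let κ : List (Fin (L + 1) → O × A) → (Fin (L + 1) → O × A) → ℝ :=
    fun past τ => seqProb (c.ker (𝔄.policyAt past)) τ
  have hκ : ∀ l x, 0 ≤ κ l x := fun l x => seqProb_nonneg _ (c.ker_nonneg _) _
  have hκ1 : ∀ l, ∑ x, κ l x = 1 := fun l => seq_total _ (c.ker_sum _) _
  obtain ⟨θ, hv, hθ⟩ := c.exists_secret hK hA ha hb T κ hκ hκ1 hsmall
  obtain ⟨μ, hμ⟩ := exists_small_weight κ hκ hκ1 (c.wt θ a b)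
    (fun μ τ => c.lam θ μ (List.ofFn τ)) (c.wt_nonneg θ ha hb)
    (fun τ => (c.wt_le θ ha hb τ).trans hab) (fun μ τ => c.lam_nonneg θ μ _)
    (fun μ l => c.sum_lam θ hv μ _ _)
    (fun μ ν => Real.sqrt c.m * |corr μ ν| / 4 + 1 / 4) (fun μ ν => by positivity)
    (fun μ ν l => by
      refine le_trans (Finset.sum_le_sum fun τ _ => ?_)
        (c.second_moment θ hv μ ν (𝔄.policyAt l))
      refine mul_le_mul_of_nonneg_left (mul_le_mul_of_nonneg_left ?_
        (mul_nonneg (c.lam_nonneg _ _ _) (c.lam_nonneg _ _ _))) (hκ l τ)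
      rw [Real.exp_le_exp, neg_le_neg_iff, mul_wt]
      refine c.wt_mono θ ?_ ?_ τ
      · rw [ha']
        have h0 : 0 ≤ |corr μ ν| := abs_nonneg _
        have e : (Real.sqrt c.m * |corr μ ν| / 4 + 1 / 4) *
            (64 * c.ε ^ 2 * c.σ ^ 2 / Real.sqrt c.m) = 16 * c.ε ^ 2 * c.σ ^ 2 * |corr μ ν| +
              16 * c.ε ^ 2 * c.σ ^ 2 / Real.sqrt c.m := by
          field_simp
          ring
        rw [e]
        have : 0 ≤ 16 * c.ε ^ 2 * c.σ ^ 2 / Real.sqrt c.m := by positivity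
        linarith
      · have h0 : 0 ≤ Real.sqrt c.m * |corr μ ν| / 4 := by positivity
        have h2 : 16 * c.ε ^ 2 ≤ b := by
          have : 0 ≤ 2 / (T : ℝ) := by positivity
          linarith
        nlinarith) (sum_exp_corr c.hm) T hθ
  refine ⟨θ, μ, ?_⟩
  -- the transcript law, both as a sequence law and against the reference law
  let κM : List (Fin (L + 1) → O × A) → (Fin (L + 1) → O × A) → ℝ :=
    fun past τ => (c.model θ μ).trajProb (𝔄.policyAt past) τ
  have hκM : ∀ l x, κM l x = κ l x * c.lam θ μ (List.ofFn x) := fun l x => c.trajProb_eq θ hv μ _ x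
  have hκM0 : ∀ l x, 0 ≤ κM l x := fun l x => by
    rw [hκM]; exact mul_nonneg (hκ l x) (c.lam_nonneg _ _ _)
  have hκM1 : ∀ l, ∑ x, κM l x = 1 := fun l => by
    simp only [hκM]; exact c.sum_lam θ hv μ _ _
  have hseq : ∀ τs : Fin T → Fin (L + 1) → O × A,
      seqProb κM τs = seqProb κ τs * ∏ t, c.lam θ μ (List.ofFn (τs t)) := by
    intro τs
    unfold seqProb
    rw [← Finset.prod_mul_distrib]
    exact Finset.prod_congr rfl fun t _ => hκM _ _
  let g : List (Fin (L + 1) → O × A) → (Fin (L + 1) → O × A) → ℝ :=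
    fun _ τ => c.ε / 10 * (1 - c.lv θ ((List.ofFn τ).take L))
  have hgap : ∀ past, ∑ τ, κM past τ * g past τ ≤
      (c.model θ μ).optValue - (c.model θ μ).value (𝔄.policyAt past) := by
    intro past
    refine le_trans (le_of_eq ?_) (c.gap_le θ hv μ (𝔄.policyAt past))
    rw [Finset.mul_sum]
    exact Finset.sum_congr rfl fun τ _ => by simp only [g, κM]; ring
  have hreg : ∑ τs : Fin T → Fin (L + 1) → O × A, seqProb κM τs *
      ∑ t : Fin T, g ((List.ofFn τs).take t.1) (τs t) ≤ (c.model θ μ).expRegret 𝔄 T := by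
    rw [seq_tower κM hκM1 g T]
    refine Finset.sum_le_sum fun τs _ => mul_le_mul_of_nonneg_left ?_ (seqProb_nonneg _ hκM0 _)
    exact Finset.sum_le_sum fun t _ => hgap _
  refine le_trans ?_ hreg
  have hpt : ∀ τs : Fin T → Fin (L + 1) → O × A,
      (if ∑ t, c.wt θ a b (τs t) ≤ 1 then
        seqProb κ τs * ∏ t, c.lam θ μ (List.ofFn (τs t)) else 0) * (c.ε / 20 * T) ≤
      seqProb κM τs * ∑ t : Fin T, g ((List.ofFn τs).take t.1) (τs t) := by
    intro τs
    have hp := seqProb_nonneg _ hκM0 τs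
    split_ifs with hw
    · rw [← hseq]
      refine mul_le_mul_of_nonneg_left ?_ hp
      simp only [g]
      rw [← Finset.mul_sum, Finset.sum_sub_distrib]
      simp only [Finset.sum_const, Finset.card_univ, Fintype.card_fin, nsmul_eq_mul, mul_one]
      have h2 : (∑ t, c.lv θ ((List.ofFn (τs t)).take L)) * (2 / T) ≤ 1 := by
        refine le_trans ?_ hw
        rw [Finset.sum_mul]
        refine Finset.sum_le_sum fun t _ => le_trans ?_ (c.last_le_wt θ ha hb (τs t))
        refine mul_le_mul_of_nonneg_left ?_ (c.lv_nonneg _ _)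
        have : 0 ≤ 16 * c.ε ^ 2 := by positivity
        linarith
      have h3 : ∑ t, c.lv θ ((List.ofFn (τs t)).take L) ≤ T / 2 := by
        rw [mul_div_assoc', div_le_one (by linarith)] at h2
        linarith
      have : c.ε / 20 * T = c.ε / 10 * (T - T / 2) := by ring
      rw [this]
      gcongr
    · rw [zero_mul]
      refine mul_nonneg hp (Finset.sum_nonneg fun t _ => mul_nonneg (by positivity) ?_)
      linarith [c.lv_le_one θ ((List.ofFn (τs t)).take L)]
  refine le_trans ?_ (Finset.sum_le_sum fun τs _ => hpt τs)
  rw [← Finset.sum_mul]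
  calc c.ε * T / 40 = 1 / 2 * (c.ε / 20 * T) := by ring
    _ ≤ _ := by
      refine mul_le_mul_of_nonneg_right ?_ (by positivity)
      exact hμ

end Cfg

/-! ### Choice of the parameters -/

/-- The budget condition of `Cfg.regret_lower`: with `ε² T` at most `10⁻⁸` times the two
competing complexities `S √O A H / α²` and `S A^{H/2} H`, each of the three terms is a small
multiple of `n K`, because `S H ≤ 30 n K`, `√O ≤ 3 √m` and `E ≥ 3⁵`. -/
lemma budget_arith {S sO A H n sm K E Y T α ε : ℝ} (hα : 0 < α) (hA : 3 ≤ A) (hsm : 0 < sm)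
    (hS0 : 0 ≤ S) (hH0 : 0 ≤ H) (hT : 0 < T)
    (hSO : sO ≤ 3 * sm) (hSn : S ≤ 5 * n) (hHK : H ≤ 6 * K) (hn : 1 ≤ n) (hK : 2 ≤ K)
    (hE : 243 ≤ E) (hY : Y ≤ E)
    (h1 : ε ^ 2 * T ≤ (1 / 10000) ^ 2 * (S * sO * A * H / α ^ 2))
    (h2 : ε ^ 2 * T ≤ (1 / 10000) ^ 2 * (S * Y * H)) :
    T * (64 * ε ^ 2 * (3 * α) ^ 2 / sm * (3 / (2 * A)) + (16 * ε ^ 2 + 2 / T) / E)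
      ≤ 1 / 64 * (2 / 3 * (n * K)) := by
  have hSH : S * H ≤ 30 * (n * K) := by
    have := mul_le_mul hSn hHK hH0 (by linarith)
    linarith
  have hnK : 2 ≤ n * K := by nlinarith
  have hA0 : 0 < A := by linarith
  have hE0 : 0 < E := by linarith
  have hSH0 : 0 ≤ S * H := mul_nonneg hS0 hH0
  have e1 : T * (64 * ε ^ 2 * (3 * α) ^ 2 / sm * (3 / (2 * A)))
      = 864 * (ε ^ 2 * T * (α ^ 2 / (sm * A))) := by
    field_simp; ring
  have b1 : ε ^ 2 * T * (α ^ 2 / (sm * A)) ≤ (1 / 10000) ^ 2 * (90 * (n * K)) := by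
    have hp : 0 ≤ α ^ 2 / (sm * A) := by positivity
    have := mul_le_mul_of_nonneg_right h1 hp
    refine this.trans ?_
    have e : (1 / 10000) ^ 2 * (S * sO * A * H / α ^ 2) * (α ^ 2 / (sm * A))
        = (1 / 10000) ^ 2 * (S * H * (sO / sm)) := by
      field_simp
    rw [e]
    have hr : sO / sm ≤ 3 := by rw [div_le_iff₀ hsm]; exact hSO
    have := mul_le_mul_of_nonneg_left hr hSH0
    nlinarith
  have e2 : T * ((16 * ε ^ 2 + 2 / T) / E) = 16 * (ε ^ 2 * T / E) + 2 / E := by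
    field_simp
  have b2 : ε ^ 2 * T / E ≤ (1 / 10000) ^ 2 * (30 * (n * K)) := by
    rw [div_le_iff₀ hE0]
    have h3 := mul_le_mul_of_nonneg_left hY hSH0
    have h4 := mul_le_mul_of_nonneg_right hSH hE0.le
    nlinarith
  have b3 : 2 / E ≤ (n * K) / 243 := by
    rw [div_le_div_iff₀ hE0 (by norm_num)]
    nlinarith
  rw [mul_add, e1, e2]
  nlinarith

/-- The consequences of `H ≥ 4 log₂ S`: the horizon is at least `10`, and `⌊H/4⌋` binary
choices address `S / 2` leaves. -/
lemma horizon_arith {S H : ℕ} (hS : 5 ≤ S) (hH : 4 * Real.logb 2 S ≤ (H : ℝ)) :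
    10 ≤ H ∧ S < 2 ^ (H / 4 + 1) := by
  have hS0 : (0 : ℝ) < S := by positivity
  have h4 : S ^ 4 ≤ 2 ^ H := by
    have h : Real.logb 2 ((S : ℝ) ^ 4) ≤ H := by
      rw [Real.logb_pow]; exact_mod_cast hH
    rw [Real.logb_le_iff_le_rpow (by norm_num) (by positivity), Real.rpow_natCast] at h
    exact_mod_cast h
  refine ⟨?_, ?_⟩
  · by_contra! hlt
    have h5 : 5 ^ 4 ≤ S ^ 4 := Nat.pow_le_pow_left hS 4
    have h9 : 2 ^ H ≤ 2 ^ 9 := Nat.pow_le_pow_right (by norm_num) (by omega)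
    norm_num at h5 h9
    omega
  · refine lt_of_pow_lt_pow_left₀ 4 (by positivity) (h4.trans_lt ?_)
    rw [← pow_mul]
    exact Nat.pow_lt_pow_right (by norm_num) (by omega)

/-- **Regret lower bound for single-step revealing POMDPs** (Corollary 5.1).
There is an absolute constant `c₀ > 0` such that for all `O ≥ S ≥ 5`, `A ≥ 3`,
`H ≥ 4 log₂ S`, `α ∈ (0, 1/(5H)]` and `T ≥ 1`, there is a finite family `ℳ` of single-step
`α`-revealing POMDPs with `|𝒮| ≤ S`, `|𝒪| ≤ O`, `|𝒜| = A` such that every `T`-episode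
algorithm suffers expected regret at least
`c₀ · min{ (S·√O·A·H·T/α²)^{1/2}, (S·A^{H/2}·H·T)^{1/2}, T }` on some member of `ℳ`. -/
theorem one_step_revealing_regret_lower_bound :
    ∃ c₀ : ℝ, 0 < c₀ ∧
      ∀ (S O A H : ℕ), 5 ≤ S → S ≤ O → 3 ≤ A →
        4 * Real.logb 2 S ≤ (H : ℝ) →
        ∀ α : ℝ, 0 < α → α ≤ 1 / (5 * H) →
        ∀ T : ℕ, 1 ≤ T →
        ∃ (σ ω : ℕ), 0 < σ ∧ σ ≤ S ∧ 0 < ω ∧ ω ≤ O ∧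
          ∃ ℳ : Set (POMDP (Fin σ) (Fin ω) (Fin A) H),
            ℳ.Finite ∧
            (∀ M ∈ ℳ, M.IsRevealing 1 α) ∧
            ∀ 𝔄 : Algorithm (Fin ω) (Fin A) H,
              ∃ M ∈ ℳ,
                c₀ *
                    min
                      (Real.sqrt ((S : ℝ) * Real.sqrt O * A * H * T / α ^ 2))
                      (min (Real.sqrt ((S : ℝ) * (A : ℝ) ^ ((H : ℝ) / 2) * H * T)) (T : ℝ)) ≤
                  M.expRegret 𝔄 T := by
  refine ⟨1 / 400000, by norm_num, ?_⟩
  intro S O A H hS hSO hA hH α hα0 hα T hT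
  obtain ⟨hH10, hSd⟩ := horizon_arith hS hH
  obtain ⟨L, rfl⟩ : ∃ L, H = L + 1 := ⟨H - 1, by omega⟩
  set d := (L + 1) / 4 with hd
  have hd2 : 2 ≤ d := by omega
  have hA3 : (3 : ℝ) ≤ A := by exact_mod_cast hA
  have hT0 : (0 : ℝ) < T := by exact_mod_cast hT
  have hHr : (0 : ℝ) < ((L + 1 : ℕ) : ℝ) := by positivity
  have hH10r : (10 : ℝ) ≤ ((L + 1 : ℕ) : ℝ) := by exact_mod_cast hH10
  have hαH : α * (5 * ((L + 1 : ℕ) : ℝ)) ≤ 1 := by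
    rwa [le_div_iff₀ (by positivity)] at hα
  have hα6 : α ≤ 1 / 6 := by nlinarith
  set X : ℝ := (S : ℝ) * Real.sqrt O * A * ((L + 1 : ℕ) : ℝ) * T / α ^ 2 with hX
  set Y : ℝ := (S : ℝ) * (A : ℝ) ^ (((L + 1 : ℕ) : ℝ) / 2) * ((L + 1 : ℕ) : ℝ) * T with hY
  set w : ℝ := min (Real.sqrt X) (min (Real.sqrt Y) (T : ℝ)) with hw
  have hX0 : 0 ≤ X := by positivity
  have hY0 : 0 ≤ Y := by positivity
  have hw0 : 0 ≤ w := le_min (Real.sqrt_nonneg _) (le_min (Real.sqrt_nonneg _) hT0.le)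
  have hwX : w ^ 2 ≤ X := by
    calc w ^ 2 ≤ Real.sqrt X ^ 2 := pow_le_pow_left₀ hw0 (min_le_left _ _) 2
      _ = X := Real.sq_sqrt hX0
  have hwY : w ^ 2 ≤ Y := by
    calc w ^ 2 ≤ Real.sqrt Y ^ 2 :=
          pow_le_pow_left₀ hw0 ((min_le_right _ _).trans (min_le_left _ _)) 2
      _ = Y := Real.sq_sqrt hY0
  have hwT : w ≤ T := (min_le_right _ _).trans (min_le_right _ _)
  set ε : ℝ := 1 / 10000 * (w / T) with hε
  have hwT1 : w / T ≤ 1 := (div_le_one hT0).2 hwT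
  have hε0 : 0 ≤ ε := by positivity
  have hε1 : ε ≤ 1 / 100 := by rw [hε]; linarith
  have hεT : ε ^ 2 * T = (1 / 10000) ^ 2 * (w ^ 2 / T) := by rw [hε]; field_simp
  have hεX : ε ^ 2 * T ≤
      (1 / 10000) ^ 2 * (S * Real.sqrt O * A * ((L + 1 : ℕ) : ℝ) / α ^ 2) := by
    rw [hεT]
    refine mul_le_mul_of_nonneg_left ?_ (by norm_num)
    rw [div_le_iff₀ hT0]
    refine hwX.trans (le_of_eq ?_)
    rw [hX]; ring
  have hεY : ε ^ 2 * T ≤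
      (1 / 10000) ^ 2 * (S * (A : ℝ) ^ (((L + 1 : ℕ) : ℝ) / 2) * ((L + 1 : ℕ) : ℝ)) := by
    rw [hεT]
    refine mul_le_mul_of_nonneg_left ?_ (by norm_num)
    rw [div_le_iff₀ hT0]
    exact hwY
  have hO : 5 ≤ O := hS.trans hSO
  have hpw : 2 ^ (d + 1) = 2 * 2 ^ d := by ring
  -- `S / 2 - 1` leaves, `O / 4` pairs of lock symbols, `H / 4` selection and entry indices.
  let c : Cfg (Fin (S / 2 - 1 + 2)) (Fin (S / 2 - 1 + O / 4 * 2)) (Fin A) L :=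
    { n := S / 2 - 1
      m := O / 4
      d := d
      K := d
      eS := Fintype.equivOfCardEq (by simp)
      eO := Fintype.equivOfCardEq (by simp)
      a0 := ⟨0, by omega⟩
      a1 := ⟨1, by omega⟩
      x0 := ⟨0, by omega⟩
      σ := 3 * α
      ε := ε
      hx0 := rfl
      hm := by omega
      ha := by simp
      hσ0 := by positivity
      hσ := by push_cast at hαH; linarith
      hε0 := hε0
      hε := by linarith
      hn := by omega
      hdK := by omega }
  have hsmall : T * (64 * c.ε ^ 2 * c.σ ^ 2 / Real.sqrt c.m * (3 / (2 * Fintype.card (Fin A))) +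
      (16 * c.ε ^ 2 + 2 / T) / (Fintype.card (Fin A) : ℝ) ^ (L + 1 - c.d - c.K))
      ≤ 1 / 64 * (2 / 3 * (c.n * c.K)) := by
    rw [Fintype.card_fin]
    have he5 : 5 ≤ L + 1 - d - d := by omega
    refine budget_arith (S := S) (sO := Real.sqrt O) (H := ((L + 1 : ℕ) : ℝ))
      (Y := (A : ℝ) ^ (((L + 1 : ℕ) : ℝ) / 2)) hα0 hA3 ?_ (by positivity) hHr.le hT0 ?_ ?_ ?_ ?_ ?_
      ?_ ?_ hεX hεY
    · have : 0 < O / 4 := by omega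
      exact Real.sqrt_pos.2 (by exact_mod_cast this)
    · have h9 : O ≤ 9 * (O / 4) := by omega
      have h9r : (O : ℝ) ≤ 3 ^ 2 * ((O / 4 : ℕ) : ℝ) := by
        have : (O : ℝ) ≤ 9 * ((O / 4 : ℕ) : ℝ) := by exact_mod_cast h9
        linarith
      refine (Real.sqrt_le_sqrt h9r).trans (le_of_eq ?_)
      rw [Real.sqrt_mul (by positivity), Real.sqrt_sq (by norm_num)]
    · have : S ≤ 5 * (S / 2 - 1) := by omega
      exact_mod_cast this
    · have : L + 1 ≤ 6 * d := by omega
      exact_mod_cast this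
    · have : 1 ≤ S / 2 - 1 := by omega
      exact_mod_cast this
    · exact_mod_cast hd2
    · calc (243 : ℝ) = 3 ^ 5 := by norm_num
        _ ≤ (A : ℝ) ^ 5 := pow_le_pow_left₀ (by norm_num) hA3 5
        _ ≤ (A : ℝ) ^ (L + 1 - d - d) := pow_le_pow_right₀ (by linarith) he5
    · have h2 : L + 1 ≤ 2 * (L + 1 - d - d) := by omega
      have h2r : ((L + 1 : ℕ) : ℝ) ≤ 2 * ((L + 1 - d - d : ℕ) : ℝ) := by exact_mod_cast h2
      rw [← Real.rpow_natCast]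
      exact Real.rpow_le_rpow_of_exponent_le (by linarith) (by linarith)
  refine ⟨S / 2 - 1 + 2, S / 2 - 1 + O / 4 * 2, by omega, by omega, by omega, by omega,
    Set.range fun p : c.Secret × (Fin c.m → Bool) => c.model p.1 p.2, Set.finite_range _, ?_, ?_⟩
  · rintro _ ⟨p, rfl⟩
    exact c.model_revealing p.1 p.2 α hα0 rfl hα6
  · intro 𝔄
    obtain ⟨θ, μ, hreg⟩ := c.regret_lower (show 0 < d by omega) (by simpa using hA) hε1 T hT
      hsmall 𝔄
    refine ⟨_, ⟨(θ, μ), rfl⟩, le_trans (le_of_eq ?_) hreg⟩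
    change 1 / 400000 * w = ε * T / 40
    rw [hε]
    field_simp
    ring
end
end

section
/- Let A ≥ 3 and A₁ be integers with 1 ≤ A₁ ≤ 1 + ⌊A/6⌋, let n, m ≥ 1 be integers, and let H be an integer with H ≥ 10n. Set H₀ := ⌊(H−n)/m⌋, let l be an integer with 0 ≤ l ≤ ⌊H/(10m)⌋, and set h⋆ := n + m·l; assume h⋆ < H. Let 𝒜 be a set of A actions and 𝒜_tr ⊆ 𝒜 a subset of size A − A₁, and let ℋ_{>h⋆} := { h : h = n + j·m for some integer j > l, and h < H }. Then the set 𝒜_code := { a = (a_{h⋆+1},…,a_{H−1}) ∈ 𝒜^{H−h⋆−1} : a_h ∈ 𝒜_tr for all h ∈ ℋ_{>h⋆} } has cardinality |𝒜_code| ≥ A^{H/2 − 1} (an inequality of real numbers, with real exponent H/2 − 1). -/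
/-!
Constraining every coordinate, and not only those in `ℋ_{>h⋆}`, already leaves enough sequences:
the set contains all maps into `Atr`, so with `B = A - A₁` and `N = H - h⋆ - 1` its cardinality is
at least `B ^ N`. The hypotheses give `10 * h⋆ ≤ 2 * H`, hence `N ≥ 4 * H / 5 - 1`, and the bound on
`A₁` gives `A ^ 5 ≤ B ^ 8` (`pow_five_le_pow_eight`; nearly tight at `A = 3`, where it reads
`243 ≤ 256`). Therefore
`B ^ N ≥ A ^ (5 / 8 * (4 * H / 5 - 1)) = A ^ (H / 2 - 5 / 8) ≥ A ^ (H / 2 - 1)`.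
-/

/-- The size `B = A - A₁` of the restricted action set satisfies `B ≥ A ^ (5 / 8)`. -/
lemma pow_five_le_pow_eight (A A₁ : ℕ) (hA : 3 ≤ A) (hA₁' : A₁ ≤ 1 + A / 6) :
    A ^ 5 ≤ (A - A₁) ^ 8 := by
  obtain ⟨B, hB⟩ : ∃ B, A - A₁ = B := ⟨_, rfl⟩
  rw [hB]
  have h1 : 5 * A ≤ 6 * B + 6 := by omega
  by_cases h7 : 7 ≤ A
  · -- Here `A ≤ 2 * B`, and `2 ^ 8 ≤ 7 ^ 3 ≤ A ^ 3` absorbs the factor lost.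
    have h2 : A ^ 8 ≤ (2 * B) ^ 8 := Nat.pow_le_pow_left (by omega) 8
    have h3 : 7 ^ 3 ≤ A ^ 3 := Nat.pow_le_pow_left h7 3
    have h4 : A ^ 5 * 7 ^ 3 ≤ A ^ 5 * A ^ 3 := Nat.mul_le_mul_left _ h3
    rw [← pow_add] at h4
    rw [mul_pow] at h2
    norm_num at h2 h4
    omega
  · have key : ∀ c : ℕ, c ≤ B → c ^ 8 ≤ B ^ 8 := fun c hc => Nat.pow_le_pow_left hc 8
    interval_cases A
    · have := key 2 (by omega); omega
    · have := key 3 (by omega); omega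
    · have := key 4 (by omega); omega
    · have := key 4 (by omega); omega

/-- Any condition of the form "some coordinates lie in `S`" is met by all maps into `S`. -/
lemma card_pow_le_card_constrained {α : Type} [Fintype α] (S : Finset α) (N : ℕ)
    (P : Fin N → Prop) :
    S.card ^ N ≤ Nat.card {f : Fin N → α // ∀ i, P i → f i ∈ S} := by
  have h : Nat.card (Fin N → S) = S.card ^ N := by simp
  rw [← h]
  refine Nat.card_le_card_of_injective
    (fun g => ⟨fun i => (g i : α), fun i _ => (g i).2⟩) ?_
  intro g g' hgg
  funext i
  exact Subtype.ext (congrFun (congrArg Subtype.val hgg) i)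

/-- **Lemma D.1 (counting passwords).** With `h⋆ = n + m·l < H`, `l ≤ ⌊H/(10m)⌋`,
`H ≥ 10n`, `A₁ ≤ 1 + ⌊A/6⌋`, and `𝒜_tr ⊆ 𝒜` of size `A − A₁`, the set of action sequences
`a ∈ 𝒜^{H−h⋆−1}` (indexed by positions `h⋆+1, …, H−1`) whose entries at positions
`h ∈ ℋ_{>h⋆} = {n + j·m : j > l, h < H}` lie in `𝒜_tr` has cardinality at least
`A^{H/2−1}`. -/
theorem password_count_lower_bound (A A₁ n m H : ℕ) (hA : 3 ≤ A) (hA₁ : 1 ≤ A₁)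
    (hA₁' : A₁ ≤ 1 + A / 6) (hn : 1 ≤ n) (hm : 1 ≤ m) (hH : 10 * n ≤ H)
    (l : ℕ) (hl : l ≤ H / (10 * m)) (hstar : n + m * l < H)
    (α : Type) [Fintype α] (hcard : Fintype.card α = A)
    (Atr : Finset α) (hAtr : Atr.card = A - A₁) :
    (A : ℝ) ^ ((H : ℝ) / 2 - 1) ≤
      (Nat.card {f : Fin (H - (n + m * l) - 1) → α //
        ∀ i : Fin (H - (n + m * l) - 1),
          ((∃ j : ℕ, l < j ∧ n + m * l + 1 + i.1 = n + j * m) ∧ n + m * l + 1 + i.1 < H) →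
            f i ∈ Atr} : ℝ) := by
  have hcount := card_pow_le_card_constrained Atr (H - (n + m * l) - 1) (fun i =>
    (∃ j : ℕ, l < j ∧ n + m * l + 1 + i.1 = n + j * m) ∧ n + m * l + 1 + i.1 < H)
  refine le_trans ?_ (Nat.cast_le.mpr hcount)
  rw [hAtr]
  have h58 := pow_five_le_pow_eight A A₁ hA hA₁'
  have hlen : 4 * H ≤ 5 * (H - (n + m * l) - 1) + 5 := by
    have h1 : l * (10 * m) ≤ H := (Nat.le_div_iff_mul_le (by omega)).mp hl
    have h2 : l * (10 * m) = 10 * (m * l) := by ring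
    omega
  generalize H - (n + m * l) - 1 = N at hlen ⊢
  generalize A - A₁ = B at h58 ⊢
  have hA1 : (1 : ℝ) ≤ A := by exact_mod_cast (by omega : 1 ≤ A)
  have hA0 : (0 : ℝ) ≤ A := by linarith
  have hlen' : 4 * (H : ℝ) ≤ 5 * N + 5 := by exact_mod_cast hlen
  have hroot : (A : ℝ) ^ (5 / 8 : ℝ) ≤ B := by
    refine le_of_pow_le_pow_left₀ (n := 8) (by norm_num) (Nat.cast_nonneg B) ?_
    rw [← Real.rpow_mul_natCast hA0]
    have h5 : (5 / 8 : ℝ) * (8 : ℕ) = (5 : ℕ) := by norm_num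
    rw [h5, Real.rpow_natCast]
    exact_mod_cast h58
  calc (A : ℝ) ^ ((H : ℝ) / 2 - 1) ≤ (A : ℝ) ^ ((5 / 8 : ℝ) * N) :=
        Real.rpow_le_rpow_of_exponent_le hA1 (by linarith)
    _ = ((A : ℝ) ^ (5 / 8 : ℝ)) ^ N := Real.rpow_mul_natCast hA0 _ _
    _ ≤ (B : ℝ) ^ N := pow_le_pow_left₀ (Real.rpow_nonneg hA0 _) hroot N
    _ = ((B ^ N : ℕ) : ℝ) := by push_cast; rfl
end

section
/- Let M be a finite episodic POMDP with horizon H, let m ≥ 1, let h ∈ {1,…,H−m}, and fix an action sequence a ∈ 𝒜^{m}. Define the matrix 𝕄_{h,a} ∈ ℝ^{𝒪^{m+1}×𝒮} by [𝕄_{h,a}]_{ω,s} := ℙ_M(o_{h:h+m} = ω | s_h = s, a_{h:h+m−1} = a). If there exists B ∈ ℝ^{𝒮×𝒪^{m+1}} with B·𝕄_{h,a}·𝕋_{h−1} = 𝕋_{h−1}, then the (m+1)-step emission-action matrix 𝕄_{h,m+1} admits a generalized left inverse B' (i.e., B'·𝕄_{h,m+1}·𝕋_{h−1} = 𝕋_{h−1})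 with ‖B'‖_{*→1} ≤ ‖B‖_{1→1}, where ‖B‖_{1→1} := max_{‖y‖₁≤1} ‖By‖₁. -/
/-!
Put the given `B` in the block of columns belonging to the action sequence `a`, and zero in every
other column; call the result `B'`. Then `B'` only sees the slice `x (·, a)` of a vector `x`, that
is, `B' x = B (x (·, a))` (`singleBlock_mulVec`). Applied to the columns of `𝕄_{h,m+1}`, whose
`a`-slice is `𝕄_{h,a}`, this gives `B' 𝕄_{h,m+1} = B 𝕄_{h,a}`, so `B'` is a generalized left
inverse. Since `‖x (·, a)‖₁ ≤ ‖x‖_*` (`sum_abs_slice_le_starNorm`), every value `‖B' x‖₁` with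
`‖x‖_* ≤ 1` is a value `‖B v‖₁` with `‖v‖₁ ≤ 1`, whence the norm bound.
-/

open Finset

noncomputable section

open Classical in
/-- The matrix equal to `B` on the block of columns `(·, a)` and zero on all other columns. -/
def singleBlock {S ι κ : Type} (a : κ) (B : Matrix S ι ℝ) : Matrix S (ι × κ) ℝ :=
  Matrix.of fun s p => if p.2 = a then B s p.1 else 0

lemma singleBlock_mulVec {S ι κ : Type} [Fintype ι] [Fintype κ] (a : κ) (B : Matrix S ι ℝ)
    (x : ι × κ → ℝ) : (singleBlock a B).mulVec x = B.mulVec fun ω => x (ω, a) := by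
  classical
  ext s
  simp [Matrix.mulVec, dotProduct, singleBlock, Fintype.sum_prod_type]

lemma sum_abs_slice_le_starNorm {ι κ : Type} [Fintype ι] [Fintype κ] (a : κ)
    (x : ι × κ → ℝ) : ∑ ω, |x (ω, a)| ≤ starNorm x :=
  Real.le_sqrt_of_sq_le <|
    Finset.single_le_sum (f := fun a : κ => (∑ ω : ι, |x (ω, a)|) ^ 2)
      (fun _ _ => sq_nonneg _) (Finset.mem_univ a)

/-- The supremum defining `opNormOneOne B` is a genuine one: the set is bounded by the sum of the
absolute values of the entries of `B`. -/
lemma bddAbove_opNormOneOne {ι₁ ι₂ : Type} [Fintype ι₁] [Fintype ι₂] (B : Matrix ι₁ ι₂ ℝ) :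
    BddAbove {y | ∃ v : ι₂ → ℝ, (∑ i, |v i|) ≤ 1 ∧ y = ∑ j, |B.mulVec v j|} := by
  refine ⟨∑ j, ∑ i, |B j i|, ?_⟩
  rintro y ⟨v, hv, rfl⟩
  refine Finset.sum_le_sum fun j _ => (Finset.abs_sum_le_sum_abs _ _).trans ?_
  refine Finset.sum_le_sum fun i _ => ?_
  have hi : |v i| ≤ 1 :=
    (Finset.single_le_sum (f := fun i => |v i|) (fun _ _ => abs_nonneg _)
      (Finset.mem_univ i)).trans hv
  rw [abs_mul]
  exact mul_le_of_le_one_right (abs_nonneg _) hi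

lemma opNormStarOne_singleBlock_le {S ι κ : Type} [Fintype S] [Fintype ι] [Fintype κ] (a : κ)
    (B : Matrix S ι ℝ) : opNormStarOne (singleBlock a B) ≤ opNormOneOne B := by
  refine csSup_le ⟨_, 0, by simp [starNorm], rfl⟩ ?_
  rintro y ⟨x, hx, rfl⟩
  rw [singleBlock_mulVec]
  exact le_csSup (bddAbove_opNormOneOne B)
    ⟨fun ω => x (ω, a), (sum_abs_slice_le_starNorm a x).trans hx, rfl⟩

/-- **Lemma E.1 (a single revealing action sequence suffices).**
If, for a fixed action sequence `a ∈ 𝒜^m`, the matrix `𝕄_{h,a} ∈ ℝ^{𝒪^{m+1}×𝒮}` of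
observation-sequence probabilities admits a `B` with `B·𝕄_{h,a}·𝕋_{h−1} = 𝕋_{h−1}`, then
the `(m+1)`-step emission–action matrix `𝕄_{h,m+1}` admits a generalized left inverse `B'`
with `‖B'‖_{*→1} ≤ ‖B‖_{1→1}`. -/
theorem genLeftInv_of_single_action_sequence {S O A : Type} [Fintype S] [Fintype O]
    [Fintype A] {H : ℕ} (M : POMDP S O A H) (m h : ℕ) (hm : 1 ≤ m)
    (hh : h ∈ Finset.Icc 1 (H - m)) (a : Fin m → A)
    (B : Matrix S (Fin (m + 1) → O) ℝ)
    (hB : ∀ c ∈ M.stepCols h,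
      (B * Matrix.of fun (ω : Fin (m + 1) → O) s => M.emitActProb (m + 1) h s ω a).mulVec c
        = c) :
    ∃ B' : Matrix S ((Fin (m + 1) → O) × (Fin (m + 1 - 1) → A)) ℝ,
      M.IsGenLeftInv h (m + 1) B' ∧ opNormStarOne B' ≤ opNormOneOne B := by
  refine ⟨singleBlock a B, fun c hc => ?_, opNormStarOne_singleBlock_le a B⟩
  rw [← Matrix.mulVec_mulVec, singleBlock_mulVec]
  have hc' := hB c hc
  rw [← Matrix.mulVec_mulVec] at hc'
  exact hc'
end
end

section
/- Let M be a finite episodic POMDP with horizon H, let m ≥ 1, let h ∈ {1,…,H−m}, fix an action sequence a ∈ 𝒜^{m}, and define 𝕄_{h,a} ∈ ℝ^{𝒪^{m+1}×𝒮} by [𝕄_{h,a}]_{ω,s} := ℙ_M(o_{h:h+m} = ω | s_h = s, a_{h:h+m−1} = a). Let 𝒮_h ⊆ 𝒮 be a set containing every state s for which 𝕋_{h−1}(s|s',a') > 0 for some (s',a') ∈ 𝒮×𝒜 (for h = 1: containing the support of μ₁), and suppose 𝒮_h is partitioned as 𝒮_h = ⊔_{i=1}^{n} 𝒮_h^{i}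 such that for all i ≠ j, s ∈ 𝒮_h^{i}, s' ∈ 𝒮_h^{j}, the supports of the columns ω ↦ [𝕄_{h,a}]_{ω,s} and ω ↦ [𝕄_{h,a}]_{ω,s'} are disjoint. If for every i the matrix 𝕄_{h,a}(𝒮_h^{i}) (the columns of 𝕄_{h,a} restricted to 𝒮_h^{i}) admits a left inverse B_i with B_i·𝕄_{h,a}(𝒮_h^{i}) = I_{𝒮_h^{i}}, then there exists B ∈ ℝ^{𝒮×𝒪^{m+1}} with B·𝕄_{h,a}·𝕋_{h−1} = 𝕋_{h−1} and ‖B‖_{1→1} ≤ max_{1≤i≤n} ‖B_i‖_{1→1}, where ‖·‖_{1→1} denotes the operator norm max_{‖y‖₁≤1} ‖·y‖₁. -/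
/-!
The `1 → 1` operator norm is the largest `ℓ¹` norm of a column. Each observation sequence `ω`
lies in the supports of columns from at most one block, and the matrix `B` (`blockGlue`) takes as
its `ω`-column the `ω`-column of that block's left inverse, extended by zero; it is zero when `ω`
lies in the support of no block. Every column of `B` is thus a column of some `Binv i` or zero,
which bounds the norm. For `s'` in block `j`, the product `B · 𝕄` only sees those `ω` on which
block `j` is active, so its `s'`-column is the extension by zero of a column of
`Binv j · 𝕄(parts j) = 1`, that is, the unit vector at `s'`. The columns of the transition matrix
are supported on the union of the blocks, hence are fixed by `B · 𝕄`.
-/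

open Finset

noncomputable section

theorem sum_abs_mulVec_le {ι κ : Type} [Fintype ι] [Fintype κ] (B : Matrix ι κ ℝ) {K : ℝ}
    (hK : 0 ≤ K) (hB : ∀ k, ∑ i, |B i k| ≤ K) (v : κ → ℝ) (hv : ∑ k, |v k| ≤ 1) :
    ∑ i, |B.mulVec v i| ≤ K :=
  calc ∑ i, |B.mulVec v i| ≤ ∑ i, ∑ k, |B i k| * |v k| := by
        refine Finset.sum_le_sum fun i _ => ?_
        simp only [Matrix.mulVec, dotProduct, ← abs_mul]
        exact Finset.abs_sum_le_sum_abs _ _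
    _ = ∑ k, (∑ i, |B i k|) * |v k| := by
        rw [Finset.sum_comm]
        simp only [Finset.sum_mul]
    _ ≤ ∑ k, K * |v k| :=
        Finset.sum_le_sum fun k _ => mul_le_mul_of_nonneg_right (hB k) (abs_nonneg _)
    _ = K * ∑ k, |v k| := by rw [Finset.mul_sum]
    _ ≤ K := mul_le_of_le_one_right hK hv

theorem opNormOneOne_le {ι κ : Type} [Fintype ι] [Fintype κ] (B : Matrix ι κ ℝ) {K : ℝ}
    (hK : 0 ≤ K) (hB : ∀ k, ∑ i, |B i k| ≤ K) : opNormOneOne B ≤ K := by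
  refine Real.sSup_le ?_ hK
  rintro y ⟨v, hv, rfl⟩
  exact sum_abs_mulVec_le B hK hB v hv

theorem opNormOneOne_nonneg {ι κ : Type} [Fintype ι] [Fintype κ] (B : Matrix ι κ ℝ) :
    0 ≤ opNormOneOne B := by
  refine Real.sSup_nonneg ?_
  rintro y ⟨v, hv, rfl⟩
  exact Finset.sum_nonneg fun _ _ => abs_nonneg _

theorem col_sum_le_opNormOneOne {ι κ : Type} [Fintype ι] [Fintype κ] (B : Matrix ι κ ℝ) (k : κ) :
    ∑ i, |B i k| ≤ opNormOneOne B := by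
  classical
  refine le_csSup ⟨∑ k, ∑ i, |B i k|, ?_⟩ ⟨Pi.single k 1, ?_, ?_⟩
  · rintro y ⟨v, hv, rfl⟩
    refine sum_abs_mulVec_le B
      (Finset.sum_nonneg fun _ _ => Finset.sum_nonneg fun _ _ => abs_nonneg _) (fun k => ?_) v hv
    exact Finset.single_le_sum (f := fun k => ∑ i, |B i k|)
      (fun _ _ => Finset.sum_nonneg fun _ _ => abs_nonneg _) (Finset.mem_univ k)
  · rw [Finset.sum_eq_single k] <;> simp +contextual
  · simp

open Classical in
/-- The matrix glued from matrices `Binv i` attached to blocks `parts i` of rows: the entry at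
`(s, ω)` is that of `Binv i` when `s` lies in block `i` and some column of `P` in block `i` is
nonzero at `ω`. When the blocks have disjoint supports, at most one
summand is nonzero. -/
def blockGlue {S Ω : Type} {n : ℕ} (P : Ω → S → ℝ) (parts : Fin n → Finset S)
    (Binv : (i : Fin n) → Matrix (parts i) Ω ℝ) : Matrix S Ω ℝ :=
  Matrix.of fun s ω => ∑ i, if hs : s ∈ parts i then
    (if ∃ s' ∈ parts i, P ω s' ≠ 0 then Binv i ⟨s, hs⟩ ω else 0) else 0

open Classical in
/-- Where block `i` is active at `ω`, the column of the glued matrix is that of `Binv i`,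
extended by zero, because no other block is active there. -/
theorem blockGlue_of_active {S Ω : Type} {n : ℕ} {P : Ω → S → ℝ} {parts : Fin n → Finset S}
    (hsupp : ∀ i j, i ≠ j → ∀ s ∈ parts i, ∀ s' ∈ parts j, ∀ ω, P ω s = 0 ∨ P ω s' = 0)
    (Binv : (i : Fin n) → Matrix (parts i) Ω ℝ) {i : Fin n} {ω : Ω} {t : S}
    (ht : t ∈ parts i) (hP : P ω t ≠ 0) (s : S) :
    blockGlue P parts Binv s ω = if hs : s ∈ parts i then Binv i ⟨s, hs⟩ ω else 0 := by
  simp only [blockGlue, Matrix.of_apply]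
  rw [Finset.sum_eq_single i]
  · have hactive : ∃ s' ∈ parts i, P ω s' ≠ 0 := ⟨t, ht, hP⟩
    simp only [if_pos hactive]
  · intro j _ hj
    have hinactive : ¬ ∃ s' ∈ parts j, P ω s' ≠ 0 := by
      rintro ⟨s', hs', h'⟩
      exact (hsupp i j hj.symm t ht s' hs' ω).elim hP h'
    simp [hinactive]
  · simp

theorem blockGlue_col_sum_le {S Ω : Type} [Fintype S] [Fintype Ω] {n : ℕ} {P : Ω → S → ℝ}
    {parts : Fin n → Finset S}
    (hsupp : ∀ i j, i ≠ j → ∀ s ∈ parts i, ∀ s' ∈ parts j, ∀ ω, P ω s = 0 ∨ P ω s' = 0)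
    (Binv : (i : Fin n) → Matrix (parts i) Ω ℝ) (ω : Ω) :
    ∑ s, |blockGlue P parts Binv s ω| ≤ ⨆ i, opNormOneOne (Binv i) := by
  classical
  by_cases hω : ∃ i, ∃ t ∈ parts i, P ω t ≠ 0
  · obtain ⟨i, t, ht, hP⟩ := hω
    have heq : ∑ s, |blockGlue P parts Binv s ω| = ∑ s : parts i, |Binv i s ω| := by
      simp only [blockGlue_of_active hsupp Binv ht hP]
      rw [← Finset.sum_subset (Finset.subset_univ (parts i)), ← Finset.sum_coe_sort]
      · exact Finset.sum_congr rfl fun s _ => by simp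
      · intro s _ hs
        simp [hs]
    rw [heq]
    exact (col_sum_le_opNormOneOne (Binv i) ω).trans
      (le_ciSup (f := fun i => opNormOneOne (Binv i)) (Set.finite_range _).bddAbove i)
  · have hzero : ∀ s, blockGlue P parts Binv s ω = 0 := fun s => by
      simp only [blockGlue, Matrix.of_apply]
      refine Finset.sum_eq_zero fun i _ => ?_
      have hinactive : ¬ ∃ s' ∈ parts i, P ω s' ≠ 0 := fun hi => hω ⟨i, hi⟩
      simp [hinactive]
    simp only [hzero, abs_zero, Finset.sum_const_zero]
    exact Real.iSup_nonneg fun i => opNormOneOne_nonneg _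

open Classical in
/-- On states covered by the blocks, the glued matrix is a left inverse of `P`. -/
theorem blockGlue_mul_apply {S Ω : Type} [Fintype Ω] {n : ℕ} {P : Ω → S → ℝ}
    {parts : Fin n → Finset S}
    (hsupp : ∀ i j, i ≠ j → ∀ s ∈ parts i, ∀ s' ∈ parts j, ∀ ω, P ω s = 0 ∨ P ω s' = 0)
    (Binv : (i : Fin n) → Matrix (parts i) Ω ℝ)
    (hBinv : ∀ i, Binv i * Matrix.of (fun ω (s : parts i) => P ω s.1) = 1)
    {j : Fin n} {s' : S} (hs' : s' ∈ parts j) (s : S) :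
    (blockGlue P parts Binv * Matrix.of P) s s' = if s = s' then 1 else 0 := by
  have hterm : ∀ ω, blockGlue P parts Binv s ω * P ω s' =
      (if hs : s ∈ parts j then Binv j ⟨s, hs⟩ ω else 0) * P ω s' := fun ω => by
    by_cases hP : P ω s' = 0
    · simp [hP]
    · rw [blockGlue_of_active hsupp Binv hs' hP]
  simp only [Matrix.mul_apply, Matrix.of_apply, hterm]
  by_cases hs : s ∈ parts j
  · have hinv := congrFun (congrFun (hBinv j) ⟨s, hs⟩) ⟨s', hs'⟩
    simpa [Matrix.mul_apply, Matrix.one_apply, hs] using hinv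
  · have hne : s ≠ s' := fun e => hs (e ▸ hs')
    simp [hs, hne]

open Classical in
/-- **Lemma E.2 (block-diagonal construction of left inverses).**
Fix an action sequence `a ∈ 𝒜^m` and write `𝕄_{h,a} ∈ ℝ^{𝒪^{m+1}×𝒮}` for the matrix of
observation-sequence probabilities.  Suppose `𝒮_h` contains every state reachable at step
`h` (i.e. the supports of all columns of `𝕋_{h−1}`), and `𝒮_h` is partitioned into blocks
`parts i` whose columns of `𝕄_{h,a}` have pairwise disjoint supports across blocks.  If
each restricted block admits a left inverse `Binv i`, then there is a matrix `B` with
`B·𝕄_{h,a}·𝕋_{h−1} = 𝕋_{h−1}` and `‖B‖_{1→1} ≤ max_i ‖Binv i‖_{1→1}`. -/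
theorem genLeftInv_of_block_structure {S O A : Type} [Fintype S] [Fintype O] [Fintype A]
    {H : ℕ} (M : POMDP S O A H) (m h n : ℕ) (hm : 1 ≤ m)
    (hh : h ∈ Finset.Icc 1 (H - m)) (a : Fin m → A)
    (Sh : Finset S)
    (hcover : ∀ c ∈ M.stepCols h, ∀ s : S, c s ≠ 0 → s ∈ Sh)
    (parts : Fin n → Finset S)
    (hpart_cover : ∀ s : S, s ∈ Sh ↔ ∃ i, s ∈ parts i)
    (hpart_disj : ∀ i j, i ≠ j → Disjoint (parts i) (parts j))
    (hsupp : ∀ i j, i ≠ j → ∀ s ∈ parts i, ∀ s' ∈ parts j, ∀ ω : Fin (m + 1) → O,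
      M.emitActProb (m + 1) h s ω a = 0 ∨ M.emitActProb (m + 1) h s' ω a = 0)
    (Binv : (i : Fin n) → Matrix (parts i) (Fin (m + 1) → O) ℝ)
    (hBinv : ∀ i,
      Binv i *
          Matrix.of (fun (ω : Fin (m + 1) → O) (s : parts i) =>
            M.emitActProb (m + 1) h s.1 ω a) =
        1) :
    ∃ B : Matrix S (Fin (m + 1) → O) ℝ,
      (∀ c ∈ M.stepCols h,
        (B * Matrix.of fun (ω : Fin (m + 1) → O) s =>
            M.emitActProb (m + 1) h s ω a).mulVec c = c) ∧
      opNormOneOne B ≤ ⨆ i, opNormOneOne (Binv i) := by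
  refine ⟨blockGlue (fun ω s => M.emitActProb (m + 1) h s ω a) parts Binv, ?_, ?_⟩
  · intro c hc
    funext s
    simp only [Matrix.mulVec, dotProduct]
    have hterm : ∀ s', (blockGlue (fun ω s => M.emitActProb (m + 1) h s ω a) parts Binv *
        Matrix.of fun (ω : Fin (m + 1) → O) s => M.emitActProb (m + 1) h s ω a) s s' * c s' =
        if s = s' then c s' else 0 := fun s' => by
      by_cases hc0 : c s' = 0
      · simp [hc0]
      · obtain ⟨j, hj⟩ := (hpart_cover s').1 (hcover c hc s' hc0)
        rw [blockGlue_mul_apply hsupp Binv hBinv hj]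
        simp
    simp [hterm]
  · exact opNormOneOne_le _ (Real.iSup_nonneg fun i => opNormOneOne_nonneg _)
      (blockGlue_col_sum_le hsupp Binv)
end
end
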